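/- arXiv:0712.4091 — 4 statements merged into one kernel-verified Lean document; each statement's English description precedes it below -/
import Mathlib

section
/- For every ε ∈ (0,1) and every compact subset K of {(t,γ) ∈ ℝ² : 0 < γ < t}, there exists M > 0 such that for all (t,γ) ∈ K and all integers k ≥ 1, the norming constants h_k of the monic orthogonal polynomials for the weight w satisfy |h_k · (1−q)^{2k+1} / ((k!)² q^{k+1}) − 1| ≤ M e^{−k^{1−ε}}, where q = e^{2γ−2t}. In particular, for fixed 0 < γ < t, h_k = ((k!)² q^{k+1}/(1−q)^{2k+1}) · (1 + O(e^{−k^{1−ε}})) as k → ∞. -/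
open Real Filter Finset

/-- The weight `w(l) = 2 e^{-2tl} sinh(2γl)` of the ferroelectric phase. -/
noncomputable def ferroWeight (t γ l : ℝ) : ℝ :=
  2 * Real.exp (-2 * t * l) * Real.sinh (2 * γ * l)

/-!
The weight is a difference `q ^ l - (ρ ^ 2) ^ l` of geometric weights, where `ρ = e^{-(t+γ)}`. For
`q ^ l` alone the monic orthogonal polynomials `Q k` are Meixner polynomials, of squared norm
`H k = k!² q^{k+1} / (1-q)^{2k+1}`. As `q ^ l` dominates the weight, extremality gives `h k ≤ H k`.
Conversely the Cauchy-Schwarz inequality for `H k = ∑ P k(l) Q k(l) q ^ l`, with the factor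
`q ^ l` split between the weight and `q ^ l + c (ρ ^ 2) ^ l`, gives
`H k ^ 2 ≤ h k * (H k + c * ∑ Q k(l) ^ 2 (ρ ^ 2) ^ l)`. Raising the degree of a Meixner polynomial
amounts to passing the sequence of its values, weighted by `ρ ^ l`, through a stable first-order
filter; an energy estimate for this filter bounds the last sum by `σ ^ k * H k` with `σ < 1`. So
the relative error is even exponentially small, uniformly on compact sets of parameters.
-/

section OrthogonalPolynomials

open Polynomial

variable {R : Type*} [CommRing R]

/-- `p` is the monic orthogonal polynomial of degree `p.natDegree` for the moment functional `L`. -/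
structure IsMonicOrthogonal (L : R[X] →ₗ[R] R) (p : R[X]) : Prop where
  monic : p.Monic
  map_mul_eq_zero : ∀ r : R[X], r.degree < p.degree → L (p * r) = 0

variable {L : R[X] →ₗ[R] R} {p r : R[X]}

lemma IsMonicOrthogonal.of_sequence (S : Sequence R) (hS : ∀ n, (S n).Monic)
    (horth : ∀ i j, i < j → L (S i * S j) = 0) (n : ℕ) : IsMonicOrthogonal L (S n) where
  monic := hS n
  map_mul_eq_zero r hr := by
    have hr_mem : r ∈ Submodule.span R (S '' Set.Iio n) := by
      rw [S.span_degreeLT fun i _ => (hS i).leadingCoeff ▸ isUnit_one, mem_degreeLT]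
      exact hr.trans_eq (S.degree_eq n)
    suffices Submodule.span R (S '' Set.Iio n) ≤ LinearMap.ker (L ∘ₗ LinearMap.mulLeft R (S n)) from
      this hr_mem
    rw [Submodule.span_le]
    rintro _ ⟨i, hi, rfl⟩
    simpa [mul_comm] using horth i n hi

variable [Nontrivial R]

lemma IsMonicOrthogonal.map_mul_eq_map_mul_self (hp : IsMonicOrthogonal L p) (hr : r.Monic)
    (hdeg : r.degree = p.degree) : L (p * r) = L (p * p) := by
  have hlt : (r - p).degree < p.degree :=
    degree_sub_lt_right hdeg hp.monic.ne_zero (by rw [hr.leadingCoeff, hp.monic.leadingCoeff])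
  have := hp.map_mul_eq_zero _ hlt
  rwa [mul_sub, map_sub, sub_eq_zero] at this

lemma IsMonicOrthogonal.map_mul_self_le [PartialOrder R] [IsOrderedRing R]
    (hp : IsMonicOrthogonal L p) (hL : ∀ s : R[X], 0 ≤ L (s * s)) (hr : r.Monic)
    (hdeg : r.degree = p.degree) : L (p * p) ≤ L (r * r) := by
  have hexpand : (r - p) * (r - p) = r * r - (p * r + p * r) + p * p := by ring
  have hnonneg := hL (r - p)
  rwa [hexpand, map_add, map_sub, map_add, hp.map_mul_eq_map_mul_self hr hdeg, sub_add,
    add_sub_cancel_right, sub_nonneg] at hnonneg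

end OrthogonalPolynomials

section Moments

open Polynomial

variable {u v w : ℕ → ℝ}

/-- All polynomial moments of the weight `w` on `ℕ` converge. -/
def HasMoments (w : ℕ → ℝ) : Prop :=
  ∀ p : ℝ[X], Summable fun x : ℕ => p.eval (x : ℝ) * w x

/-- The geometric weight `r ^ l` on the positive integers `l`, in the variable `x = l - 1`. -/
def geometricWeight (r : ℝ) (x : ℕ) : ℝ := r ^ (x + 1)

lemma geometricWeight_nonneg {r : ℝ} (hr : 0 ≤ r) : 0 ≤ geometricWeight r :=
  fun x => pow_nonneg hr (x + 1)

lemma geometricWeight_mono {r s : ℝ} (hr : 0 ≤ r) (hrs : r ≤ s) :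
    geometricWeight r ≤ geometricWeight s := fun x => pow_le_pow_left₀ hr hrs (x + 1)

namespace HasMoments

lemma geometric {r : ℝ} (hr : ‖r‖ < 1) : HasMoments (geometricWeight r) := by
  intro p
  simp_rw [geometricWeight, eval_eq_sum_range, sum_mul]
  refine summable_sum fun i _ => ?_
  simpa only [pow_succ', mul_assoc, mul_left_comm] using
    (summable_pow_mul_geometric_of_norm_lt_one (R := ℝ) i hr).mul_left (p.coeff i * r)

lemma add (hu : HasMoments u) (hv : HasMoments v) : HasMoments (u + v) := fun p => by
  simpa only [Pi.add_apply, mul_add] using (hu p).add (hv p)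

lemma const_smul (c : ℝ) (hw : HasMoments w) : HasMoments (c • w) := fun p => by
  simpa only [Pi.smul_apply, smul_eq_mul, mul_left_comm] using (hw p).mul_left c

lemma sub (hu : HasMoments u) (hv : HasMoments v) : HasMoments (u - v) := by
  simpa only [neg_smul, one_smul, sub_eq_add_neg] using hu.add (hv.const_smul (-1))

/-- The moment functional `p ↦ ∑ p(x) w(x)`. -/
noncomputable def functional (hw : HasMoments w) : ℝ[X] →ₗ[ℝ] ℝ where
  toFun p := ∑' x : ℕ, p.eval (x : ℝ) * w x
  map_add' p r := by simp only [eval_add, add_mul, (hw p).tsum_add (hw r)]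
  map_smul' c p := by simp only [eval_smul, smul_eq_mul, mul_assoc, tsum_mul_left, RingHom.id_apply]

lemma functional_apply (hw : HasMoments w) (p : ℝ[X]) :
    hw.functional p = ∑' x : ℕ, p.eval (x : ℝ) * w x := rfl

lemma functional_add_smul (hu : HasMoments u) (hv : HasMoments v) (c : ℝ) (p : ℝ[X]) :
    (hu.add (hv.const_smul c)).functional p = hu.functional p + c * hv.functional p := by
  simp only [functional_apply, ← tsum_mul_left, ← (hu p).tsum_add ((hv p).mul_left c), Pi.add_apply,
    Pi.smul_apply, smul_eq_mul, mul_add, mul_left_comm]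

lemma functional_mul_self_nonneg (hw : HasMoments w) (hw0 : 0 ≤ w) (p : ℝ[X]) :
    0 ≤ hw.functional (p * p) :=
  tsum_nonneg fun x => by
    rw [eval_mul]
    exact mul_nonneg (mul_self_nonneg _) (hw0 x)

lemma functional_mul_self_mono (hu : HasMoments u) (hw : HasMoments w) (hwu : w ≤ u) (p : ℝ[X]) :
    hw.functional (p * p) ≤ hu.functional (p * p) :=
  (hw _).tsum_le_tsum (fun x => by
    rw [eval_mul]
    exact mul_le_mul_of_nonneg_left (hwu x) (mul_self_nonneg _)) (hu _)

lemma sq_functional_mul_le (hu : HasMoments u) (hv : HasMoments v) (hw : HasMoments w)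
    (hv0 : 0 ≤ v) (hw0 : 0 ≤ w) (huvw : ∀ x, u x ^ 2 ≤ w x * v x) (p r : ℝ[X]) :
    hu.functional (p * r) ^ 2 ≤ hw.functional (p * p) * hv.functional (r * r) := by
  have hp (x : ℕ) : 0 ≤ (p * p).eval (x : ℝ) * w x := by
    rw [eval_mul]
    exact mul_nonneg (mul_self_nonneg _) (hw0 x)
  have hr (x : ℕ) : 0 ≤ (r * r).eval (x : ℝ) * v x := by
    rw [eval_mul]
    exact mul_nonneg (mul_self_nonneg _) (hv0 x)
  refine le_of_tendsto' ((hu (p * r)).hasSum.tendsto_sum_nat.pow 2) fun N => ?_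
  calc (∑ x ∈ range N, (p * r).eval (x : ℝ) * u x) ^ 2
      ≤ (∑ x ∈ range N, (p * p).eval (x : ℝ) * w x) *
          ∑ x ∈ range N, (r * r).eval (x : ℝ) * v x := by
        refine sum_sq_le_sum_mul_sum_of_sq_le_mul _ (fun x _ => hp x) (fun x _ => hr x)
          fun x _ => ?_
        have := mul_le_mul_of_nonneg_left (huvw x) (sq_nonneg ((p * r).eval (x : ℝ)))
        simp only [eval_mul] at this ⊢
        linarith
    _ ≤ hw.functional (p * p) * hv.functional (r * r) :=
        mul_le_mul ((hw _).sum_le_tsum _ fun x _ => hp x) ((hv _).sum_le_tsum _ fun x _ => hr x)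
          (sum_nonneg fun x _ => hr x) (tsum_nonneg hp)

lemma functional_geometric {q : ℝ} (hq : HasMoments (geometricWeight q)) (p : ℝ[X]) :
    hq.functional p = q * p.eval 0 + q * hq.functional (taylor 1 p) := by
  rw [functional_apply, (hq p).tsum_eq_zero_add, functional_apply, ← tsum_mul_left]
  simp only [taylor_eval, Nat.cast_zero, Nat.cast_add, Nat.cast_one, zero_add, pow_one,
    geometricWeight, pow_succ' q (_ + 1), mul_comm _ q, mul_left_comm _ q]

end HasMoments

end Moments

section TaylorSub

open Polynomial

lemma degree_taylor_sub_lt {R : Type*} [CommRing R] {p : R[X]} (hp : p ≠ 0) (r : R) :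
    (taylor r p - p).degree < p.degree :=
  degree_sub_lt_right (degree_taylor p r) hp (leadingCoeff_taylor r p)

lemma coeff_taylor_one_sub {R : Type*} [CommRing R] {n : ℕ} {p : R[X]} (hp : p.natDegree ≤ n + 1) :
    (taylor 1 p - p).coeff n = (n + 1) * p.coeff (n + 1) := by
  have hdeg : (hasseDeriv n p).natDegree < 2 := by
    have := natDegree_hasseDeriv_le p n
    lia
  rw [coeff_sub, taylor_coeff, eval_eq_sum_range' hdeg]
  simp [sum_range_succ, hasseDeriv_coeff, add_comm 1 n]

end TaylorSub

section Meixner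

open Polynomial Nat

variable {K : Type*} [Field K]

/-- The Meixner polynomial `M_n(x; β, c) = ₂F₁(-n, -x; β; 1 - c⁻¹)` with `β = 1` and `c = q`. The
hypergeometric sum is written as `∑ (n choose j) (x choose j) (1 - q⁻¹)^j`. -/
noncomputable def meixner (q : K) (n : ℕ) : K[X] :=
  ∑ j ∈ range (n + 1), C (n.choose j * (1 - q⁻¹) ^ j / j !) * descPochhammer K j

lemma meixner_zero (q : K) : meixner q 0 = 1 := by simp [meixner]

lemma natDegree_meixner_le (q : K) (n : ℕ) : (meixner q n).natDegree ≤ n :=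
  natDegree_sum_le_of_forall_le _ _ fun j hj => (natDegree_C_mul_le _ _).trans <| by
    rw [descPochhammer_natDegree]
    exact mem_range_succ_iff.1 hj

lemma coeff_meixner (q : K) (n : ℕ) : (meixner q n).coeff n = (1 - q⁻¹) ^ n / n ! := by
  rw [meixner, finsetSum_coeff, sum_range_succ, sum_eq_zero, coeff_C_mul]
  · have hlead := (monic_descPochhammer K n).coeff_natDegree
    rw [descPochhammer_natDegree] at hlead
    simp [hlead]
  · intro j hj
    rw [coeff_C_mul, coeff_eq_zero_of_natDegree_lt, mul_zero]
    rw [descPochhammer_natDegree]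
    exact mem_range.1 hj

lemma one_sub_inv_pow {q : K} (hq0 : q ≠ 0) (n : ℕ) :
    (1 - q⁻¹) ^ n = (-1) ^ n * (1 - q) ^ n / q ^ n := by
  rw [← mul_pow, ← div_pow, neg_one_mul, neg_sub, sub_div, div_self hq0, one_div]

variable [CharZero K]

lemma eval_meixner (q : K) (n x : ℕ) :
    (meixner q n).eval (x : K) =
      ∑ j ∈ range (n + 1), n.choose j * (1 - q⁻¹) ^ j * x.choose j := by
  simp only [meixner, eval_finsetSum, eval_C_mul, cast_choose_eq_descPochhammer_div K x]
  exact sum_congr rfl fun j _ => by ring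

lemma sum_range_choose_eq_choose_succ (x j : ℕ) : ∑ y ∈ range x, y.choose j = x.choose (j + 1) := by
  induction x with
  | zero => simp
  | succ x ih => rw [sum_range_succ, ih, choose_succ_succ', add_comm]

lemma eval_meixner_succ (q : K) (n x : ℕ) :
    (meixner q (n + 1)).eval (x : K) =
      (meixner q n).eval (x : K) + (1 - q⁻¹) * ∑ y ∈ range x, (meixner q n).eval (y : K) := by
  have hsum : ∑ y ∈ range x, (meixner q n).eval (y : K) =
      ∑ j ∈ range (n + 1), n.choose j * (1 - q⁻¹) ^ j * x.choose (j + 1) := by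
    simp only [eval_meixner, ← sum_range_choose_eq_choose_succ x, cast_sum, mul_sum]
    exact sum_comm
  have hextend : (meixner q n).eval (x : K) =
      ∑ j ∈ range (n + 2), n.choose j * (1 - q⁻¹) ^ j * x.choose j := by
    rw [sum_range_succ, choose_succ_self, cast_zero, zero_mul, zero_mul, add_zero, eval_meixner]
  rw [hsum, hextend, eval_meixner, sum_range_succ', sum_range_succ' _ (n + 1), mul_sum,
    add_right_comm, ← sum_add_distrib]
  congr 1
  · refine sum_congr rfl fun j _ => ?_
    rw [choose_succ_succ']
    push_cast
    ring
  · simp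

lemma taylor_meixner_succ_sub (q : K) (n : ℕ) :
    taylor 1 (meixner q (n + 1)) - meixner q (n + 1) =
      taylor 1 (meixner q n) - C q⁻¹ * meixner q n := by
  refine eq_of_infinite_eval_eq _ _ ((Set.infinite_range_of_injective cast_injective).mono ?_)
  rintro _ ⟨x, rfl⟩
  have hx := eval_meixner_succ q n (x + 1)
  rw [sum_range_succ, mul_add, ← add_assoc] at hx
  push_cast at hx
  simp only [Set.mem_ofPred_eq, eval_sub, eval_C_mul, taylor_eval, hx, eval_meixner_succ q n x]
  ring

-- For the functional `L p = ∑ p(x) κ q ^ x`, the hypothesis `hL` splits off the term `x = 0`.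
variable {q κ : K} {L : K[X] →ₗ[K] K}

lemma one_sub_mul_map_mul_meixner_succ (hq : q ≠ 0)
    (hL : ∀ p : K[X], L p = κ * p.eval 0 + q * L (taylor 1 p)) (p : K[X]) (n : ℕ) :
    (1 - q) * L (p * meixner q (n + 1)) =
      q * L ((taylor 1 p - p) * meixner q (n + 1)) - L ((taylor 1 p - p) * meixner q n) := by
  have hzero (m : ℕ) : (meixner q m).eval 0 = 1 := by
    simpa [sum_range_succ'] using eval_meixner q m 0
  have hshift : q • (taylor 1 p * taylor 1 (meixner q (n + 1))) =
      q • (taylor 1 p * meixner q (n + 1)) + q • (taylor 1 p * taylor 1 (meixner q n)) -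
        taylor 1 p * meixner q n := by
    have hC : C q * C q⁻¹ = (1 : K[X]) := by rw [← C_mul, mul_inv_cancel₀ hq, C_1]
    simp only [smul_eq_C_mul]
    linear_combination C q * taylor 1 p * taylor_meixner_succ_sub q n -
      taylor 1 p * meixner q n * hC
  have hmap := congrArg L hshift
  have hsucc := hL (p * meixner q (n + 1))
  have hself := hL (p * meixner q n)
  simp only [map_add, map_sub, map_smul, smul_eq_mul, taylor_mul, eval_mul, hzero, sub_mul] at *
  linear_combination hsucc - hself + hmap

-- Passing from `p` to `taylor 1 p - p` lowers the degree; hence the nested inductions.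
theorem map_mul_meixner (hq0 : q ≠ 0) (hq1 : q ≠ 1)
    (hL : ∀ p : K[X], L p = κ * p.eval 0 + q * L (taylor 1 p)) {n : ℕ} {p : K[X]}
    (hp : p.natDegree ≤ n) :
    L (p * meixner q n) = p.coeff n * (κ * (-1) ^ n * n ! / (1 - q) ^ (n + 1)) := by
  have hq : 1 - q ≠ 0 := sub_ne_zero.2 hq1.symm
  induction n generalizing p with
  | zero =>
    rw [eq_C_of_natDegree_le_zero hp, meixner_zero, mul_one, coeff_C_zero]
    have := hL (C (p.coeff 0))
    rw [taylor_C, eval_C] at this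
    field_simp
    simp only [zero_add, pow_one, factorial_zero, cast_one, mul_one]
    linear_combination this
  | succ n ih =>
    induction hd : p.degree using WellFoundedLT.induction generalizing p with
    | ind d ih_degree =>
    rcases eq_or_ne p 0 with rfl | hp0
    · simp
    set Δ := taylor 1 p - p with hΔ
    have hlt : Δ.degree < p.degree := degree_taylor_sub_lt hp0 1
    have hΔ_degree : Δ.degree < (n + 1 : ℕ) := hlt.trans_le (natDegree_le_iff_degree_le.1 hp)
    have hΔ_natDegree : Δ.natDegree ≤ n := natDegree_le_of_degree_le (Order.le_of_lt_succ hΔ_degree)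
    have hsucc : L (Δ * meixner q (n + 1)) = 0 := by
      rw [ih_degree _ (hd ▸ hlt) (hΔ_natDegree.trans n.le_succ) rfl,
        coeff_eq_zero_of_degree_lt hΔ_degree, zero_mul]
    have hmul := one_sub_mul_map_mul_meixner_succ hq0 hL p n
    rw [← hΔ, hsucc, ih hΔ_natDegree, hΔ, coeff_taylor_one_sub hp] at hmul
    rw [← mul_right_inj' hq, hmul, factorial_succ]
    push_cast
    field_simp
    ring

lemma pow_mul_map_meixner_mul_self (hq0 : q ≠ 0) (hq1 : q ≠ 1)
    (hL : ∀ p : K[X], L p = κ * p.eval 0 + q * L (taylor 1 p)) (n : ℕ) :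
    q ^ n * L (meixner q n * meixner q n) = L 1 := by
  have hone : L 1 = κ / (1 - q) := by
    simpa [meixner_zero] using map_mul_meixner hq0 hq1 hL (natDegree_one (R := K)).le
  have hq : 1 - q ≠ 0 := sub_ne_zero.2 hq1.symm
  have hfact : (n ! : K) ≠ 0 := cast_ne_zero.2 n.factorial_ne_zero
  have hsign : ((-1 : K) ^ n) ^ 2 = 1 := by rw [← pow_mul, mul_comm, pow_mul, neg_one_sq, one_pow]
  rw [hone, map_mul_meixner hq0 hq1 hL (natDegree_meixner_le q n), coeff_meixner,
    one_sub_inv_pow hq0]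
  field_simp
  linear_combination κ * (1 - q) * (1 - q) ^ n * hsign

end Meixner

section Dissipation

variable {r ρ : ℝ}

-- `y ^ 2 - x ^ 2` is the increment of the energy stored in the filter, which telescopes.
lemma sq_sub_mul_add_le (hρ : 0 ≤ ρ) (hρr : ρ ≤ r) (hrρ : r * ρ ≤ 1) (x y : ℝ) :
    (y - r * x) ^ 2 + (1 + r) * (r - ρ) / (1 + ρ) * (y ^ 2 - x ^ 2) ≤
      ((1 + r) / (1 + ρ)) ^ 2 * (y - ρ * x) ^ 2 := by
  have hgap : ((1 + r) / (1 + ρ)) ^ 2 * (y - ρ * x) ^ 2 -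
      ((y - r * x) ^ 2 + (1 + r) * (r - ρ) / (1 + ρ) * (y ^ 2 - x ^ 2)) =
      (r - ρ) * (1 - r * ρ) * ((x + y) / (1 + ρ)) ^ 2 := by
    field_simp
    ring
  rw [← sub_nonneg, hgap]
  exact mul_nonneg (mul_nonneg (sub_nonneg.2 hρr) (sub_nonneg.2 hrρ)) (sq_nonneg _)

lemma sum_sq_sub_mul_le (hρ : 0 ≤ ρ) (hρr : ρ ≤ r) (hrρ : r * ρ ≤ 1) {u : ℕ → ℝ} (hu : u 0 = 0)
    (N : ℕ) :
    ∑ x ∈ range N, (u (x + 1) - r * u x) ^ 2 ≤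
      ((1 + r) / (1 + ρ)) ^ 2 * ∑ x ∈ range N, (u (x + 1) - ρ * u x) ^ 2 := by
  have hstored : 0 ≤ (1 + r) * (r - ρ) / (1 + ρ) * u N ^ 2 := by
    have hr : 0 ≤ r := hρ.trans hρr
    have := sub_nonneg.2 hρr
    positivity
  calc ∑ x ∈ range N, (u (x + 1) - r * u x) ^ 2
      ≤ ∑ x ∈ range N, (u (x + 1) - r * u x) ^ 2 + (1 + r) * (r - ρ) / (1 + ρ) * u N ^ 2 :=
        le_add_of_nonneg_right hstored
    _ = ∑ x ∈ range N, ((u (x + 1) - r * u x) ^ 2 +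
          (1 + r) * (r - ρ) / (1 + ρ) * (u (x + 1) ^ 2 - u x ^ 2)) := by
        rw [sum_add_distrib, ← mul_sum, sum_range_sub fun x => u x ^ 2, hu]
        ring
    _ ≤ _ := by
        rw [mul_sum]
        exact sum_le_sum fun x _ => sq_sub_mul_add_le hρ hρr hrρ _ _

end Dissipation

section MonicMeixner

open Polynomial Nat

variable {K : Type*} [Field K] {q κ : K} {L : K[X] →ₗ[K] K}

/-- The monic Meixner polynomial with parameters `β = 1` and `c = q`. -/
noncomputable def monicMeixner (q : K) (n : ℕ) : K[X] :=
  C (n ! / (1 - q⁻¹) ^ n) * meixner q n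

lemma natDegree_monicMeixner_le (q : K) (n : ℕ) : (monicMeixner q n).natDegree ≤ n :=
  (natDegree_C_mul_le _ _).trans (natDegree_meixner_le q n)

variable [CharZero K]

lemma coeff_monicMeixner (hq1 : q ≠ 1) (n : ℕ) : (monicMeixner q n).coeff n = 1 := by
  have hq : 1 - q⁻¹ ≠ 0 := sub_ne_zero.2 (inv_ne_one.2 hq1).symm
  rw [monicMeixner, coeff_C_mul, coeff_meixner, ← inv_div ((1 - q⁻¹) ^ n),
    inv_mul_cancel₀ (div_ne_zero (pow_ne_zero n hq) (cast_ne_zero.2 n.factorial_ne_zero))]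

lemma degree_monicMeixner (hq1 : q ≠ 1) (n : ℕ) : (monicMeixner q n).degree = n :=
  degree_eq_of_le_of_coeff_ne_zero (natDegree_le_iff_degree_le.1 (natDegree_monicMeixner_le q n))
    (coeff_monicMeixner hq1 n ▸ one_ne_zero)

lemma monic_monicMeixner (hq1 : q ≠ 1) (n : ℕ) : (monicMeixner q n).Monic :=
  monic_of_natDegree_le_of_coeff_eq_one n (natDegree_monicMeixner_le q n) (coeff_monicMeixner hq1 n)

lemma map_mul_monicMeixner (hq0 : q ≠ 0) (hq1 : q ≠ 1)
    (hL : ∀ p : K[X], L p = κ * p.eval 0 + q * L (taylor 1 p)) {n : ℕ} {p : K[X]}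
    (hp : p.natDegree ≤ n) :
    L (p * monicMeixner q n) = p.coeff n * (κ * n ! ^ 2 * q ^ n / (1 - q) ^ (2 * n + 1)) := by
  rw [monicMeixner, ← smul_eq_C_mul, mul_smul_comm, map_smul, map_mul_meixner hq0 hq1 hL hp,
    one_sub_inv_pow hq0, smul_eq_mul]
  field_simp
  ring

lemma isMonicOrthogonal_monicMeixner (hq0 : q ≠ 0) (hq1 : q ≠ 1)
    (hL : ∀ p : K[X], L p = κ * p.eval 0 + q * L (taylor 1 p)) (n : ℕ) :
    IsMonicOrthogonal L (monicMeixner q n) where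
  monic := monic_monicMeixner hq1 n
  map_mul_eq_zero r hr := by
    rw [degree_monicMeixner hq1] at hr
    rw [mul_comm, map_mul_monicMeixner hq0 hq1 hL (natDegree_le_of_degree_le hr.le),
      coeff_eq_zero_of_degree_lt hr, zero_mul]

lemma map_monicMeixner_mul_self (hq0 : q ≠ 0) (hq1 : q ≠ 1)
    (hL : ∀ p : K[X], L p = κ * p.eval 0 + q * L (taylor 1 p)) (n : ℕ) :
    L (monicMeixner q n * monicMeixner q n) = κ * n ! ^ 2 * q ^ n / (1 - q) ^ (2 * n + 1) := by
  rw [map_mul_monicMeixner hq0 hq1 hL (natDegree_monicMeixner_le q n), coeff_monicMeixner hq1,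
    one_mul]

end MonicMeixner

section Rate

open Polynomial

/-- The rate at which the squared norms of the Meixner polynomials with parameters `β = 1` and
`c = q` in the weight `(ρ²)^l` decay relative to those in their own weight `q^l`. With `q = a²` and
`ρ = ab` it is `((a + b) / (1 + ab))²`. -/
noncomputable def meixnerRate (q ρ : ℝ) : ℝ := q * ((1 + ρ / q) / (1 + ρ)) ^ 2

variable {q ρ : ℝ}

lemma meixnerRate_pos (hq0 : 0 < q) (hρ : 0 ≤ ρ) : 0 < meixnerRate q ρ := by
  unfold meixnerRate
  positivity

lemma meixnerRate_lt_one (hq0 : 0 < q) (hq1 : q < 1) (hρ : 0 ≤ ρ) (hρq : ρ ^ 2 < q) :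
    meixnerRate q ρ < 1 := by
  have hrate : meixnerRate q ρ = (q + ρ) ^ 2 / (q * (1 + ρ) ^ 2) := by
    unfold meixnerRate
    field_simp
  rw [hrate, div_lt_one (by positivity)]
  linarith [mul_pos (sub_pos.2 hq1) (sub_pos.2 hρq)]

lemma sum_sq_eval_meixner_succ_le (hq0 : 0 < q) (hq1 : q ≤ 1) (hρ : 0 ≤ ρ) (hρq : ρ ^ 2 ≤ q)
    (n N : ℕ) :
    ∑ x ∈ range N, (ρ ^ (x + 1) * (meixner q (n + 1)).eval (x : ℝ)) ^ 2 ≤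
      ((1 + ρ / q) / (1 + ρ)) ^ 2 *
        ∑ x ∈ range N, (ρ ^ (x + 1) * (meixner q n).eval (x : ℝ)) ^ 2 := by
  set u : ℕ → ℝ := fun x => ρ ^ x * ∑ y ∈ range x, (meixner q n).eval (y : ℝ) with hu
  have hn (x : ℕ) : ρ ^ (x + 1) * (meixner q n).eval (x : ℝ) = u (x + 1) - ρ * u x := by
    simp only [hu, sum_range_succ]
    ring
  have hn_succ (x : ℕ) :
      ρ ^ (x + 1) * (meixner q (n + 1)).eval (x : ℝ) = u (x + 1) - ρ / q * u x := by
    simp only [hu, sum_range_succ, eval_meixner_succ]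
    ring
  simp only [hn, hn_succ]
  refine sum_sq_sub_mul_le hρ (le_div_self hρ hq0 hq1) ?_ (by simp [hu]) N
  rw [div_mul_eq_mul_div, ← sq]
  exact div_le_one_of_le₀ hρq hq0.le

lemma functional_meixner_succ_mul_self_le (hq0 : 0 < q) (hq1 : q ≤ 1) (hρ : 0 ≤ ρ)
    (hρq : ρ ^ 2 ≤ q) (hv : HasMoments (geometricWeight (ρ ^ 2))) (n : ℕ) :
    hv.functional (meixner q (n + 1) * meixner q (n + 1)) ≤
      ((1 + ρ / q) / (1 + ρ)) ^ 2 * hv.functional (meixner q n * meixner q n) := by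
  have hterm (m x : ℕ) : (meixner q m * meixner q m).eval (x : ℝ) * geometricWeight (ρ ^ 2) x =
      (ρ ^ (x + 1) * (meixner q m).eval (x : ℝ)) ^ 2 := by
    rw [eval_mul, geometricWeight]
    ring
  simp only [HasMoments.functional_apply, hterm]
  refine Real.tsum_le_of_sum_range_le (fun x => sq_nonneg _) fun N =>
    (sum_sq_eval_meixner_succ_le hq0 hq1 hρ hρq n N).trans <|
      mul_le_mul_of_nonneg_left (Summable.sum_le_tsum _ (fun x _ => sq_nonneg _) ?_) (sq_nonneg _)
  simpa only [hterm] using hv (meixner q n * meixner q n)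

lemma functional_meixner_mul_self_le (hq0 : 0 < q) (hq1 : q ≤ 1) (hρ : 0 ≤ ρ)
    (hρq : ρ ^ 2 ≤ q) (hv : HasMoments (geometricWeight (ρ ^ 2))) (n : ℕ) :
    hv.functional (meixner q n * meixner q n) ≤
      (((1 + ρ / q) / (1 + ρ)) ^ 2) ^ n * hv.functional 1 := by
  induction n with
  | zero => simp [meixner_zero]
  | succ n ih =>
    rw [pow_succ' _ n, mul_assoc]
    exact (functional_meixner_succ_mul_self_le hq0 hq1 hρ hρq hv n).trans
      (mul_le_mul_of_nonneg_left ih (sq_nonneg _))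

lemma functional_monicMeixner_mul_self_le (hq0 : 0 < q) (hq1 : q < 1) (hρ : 0 ≤ ρ)
    (hρq : ρ ^ 2 ≤ q) (hu : HasMoments (geometricWeight q))
    (hv : HasMoments (geometricWeight (ρ ^ 2))) (n : ℕ) :
    hv.functional (monicMeixner q n * monicMeixner q n) ≤
      meixnerRate q ρ ^ n * hu.functional (monicMeixner q n * monicMeixner q n) := by
  have hone : hv.functional 1 ≤ hu.functional 1 := by
    simpa using hu.functional_mul_self_mono hv (geometricWeight_mono (sq_nonneg ρ) hρq) 1
  have hmeixner : hv.functional (meixner q n * meixner q n) ≤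
      meixnerRate q ρ ^ n * hu.functional (meixner q n * meixner q n) := by
    rw [meixnerRate, mul_pow, mul_comm (q ^ n), mul_assoc,
      pow_mul_map_meixner_mul_self hq0.ne' hq1.ne hu.functional_geometric]
    exact (functional_meixner_mul_self_le hq0 hq1.le hρ hρq hv n).trans
      (mul_le_mul_of_nonneg_left hone (by positivity))
  simp only [monicMeixner, ← smul_eq_C_mul, smul_mul_smul_comm, map_smul, smul_eq_mul,
    mul_left_comm (meixnerRate q ρ ^ n)]
  exact mul_le_mul_of_nonneg_left hmeixner (mul_self_nonneg _)

end Rate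

section Sandwich

open Polynomial Nat

lemma sq_geometricWeight_le {q r : ℝ} (hr : 0 ≤ r) (hrq : r < q) (x : ℕ) :
    geometricWeight q x ^ 2 ≤ (geometricWeight q - geometricWeight r) x *
      (geometricWeight q + (q / (q - r)) • geometricWeight r) x := by
  have hgap := sub_pos.2 hrq
  have hq0 := hr.trans_lt hrq
  have hpow := sub_nonneg.2 (pow_le_pow_left₀ hr hrq.le x)
  have hexcess : (geometricWeight q - geometricWeight r) x *
      (geometricWeight q + (q / (q - r)) • geometricWeight r) x - geometricWeight q x ^ 2 =
      q * (q ^ x - r ^ x) * r ^ (x + 2) / (q - r) := by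
    simp only [Pi.sub_apply, Pi.add_apply, Pi.smul_apply, smul_eq_mul, geometricWeight]
    field_simp
    ring
  rw [← sub_nonneg, hexcess]
  positivity

lemma IsMonicOrthogonal.functional_mul_self_le_monicMeixner {q r : ℝ} (hq1 : q ≠ 1) (hr : 0 ≤ r)
    (hrq : r ≤ q) (hu : HasMoments (geometricWeight q))
    {hw : HasMoments (geometricWeight q - geometricWeight r)} {p : ℝ[X]}
    (hp : IsMonicOrthogonal hw.functional p) :
    hw.functional (p * p) ≤
      hu.functional (monicMeixner q p.natDegree * monicMeixner q p.natDegree) := by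
  have hw_nonneg := sub_nonneg.2 (geometricWeight_mono hr hrq)
  refine (hp.map_mul_self_le (hw.functional_mul_self_nonneg hw_nonneg)
    (monic_monicMeixner hq1 _) ?_).trans
      (hu.functional_mul_self_mono hw (sub_le_self _ (geometricWeight_nonneg hr)) _)
  rw [degree_monicMeixner hq1, degree_eq_natDegree hp.monic.ne_zero]

variable {q ρ : ℝ} {hw : HasMoments (geometricWeight q - geometricWeight (ρ ^ 2))} {p : ℝ[X]}

lemma IsMonicOrthogonal.functional_monicMeixner_le (hq0 : 0 < q) (hq1 : q < 1) (hρ : 0 ≤ ρ)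
    (hρq : ρ ^ 2 < q) (hu : HasMoments (geometricWeight q))
    (hv : HasMoments (geometricWeight (ρ ^ 2))) (hp : IsMonicOrthogonal hw.functional p) :
    hu.functional (monicMeixner q p.natDegree * monicMeixner q p.natDegree) ≤
      (1 + q / (q - ρ ^ 2) * meixnerRate q ρ ^ p.natDegree) * hw.functional (p * p) := by
  set Q := monicMeixner q p.natDegree
  set c := q / (q - ρ ^ 2)
  have hc : 0 ≤ c := div_nonneg hq0.le (sub_nonneg.2 hρq.le)
  have hdeg : p.degree = Q.degree := by
    rw [degree_monicMeixner hq1.ne, degree_eq_natDegree hp.monic.ne_zero]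
  have hQ : IsMonicOrthogonal hu.functional Q :=
    isMonicOrthogonal_monicMeixner hq0.ne' hq1.ne hu.functional_geometric _
  have hQ_pos : 0 < hu.functional (Q * Q) := by
    rw [map_monicMeixner_mul_self hq0.ne' hq1.ne hu.functional_geometric]
    have := sub_pos.2 hq1
    positivity
  have hcauchy := hu.sq_functional_mul_le (hu.add (hv.const_smul c)) hw
    (add_nonneg (geometricWeight_nonneg hq0.le)
      (smul_nonneg hc (geometricWeight_nonneg (sq_nonneg ρ))))
    (sub_nonneg.2 (geometricWeight_mono (sq_nonneg ρ) hρq.le))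
    (sq_geometricWeight_le (sq_nonneg ρ) hρq) p Q
  rw [mul_comm p Q, hQ.map_mul_eq_map_mul_self hp.monic hdeg, hu.functional_add_smul hv] at hcauchy
  refine le_of_mul_le_mul_right ?_ hQ_pos
  calc hu.functional (Q * Q) * hu.functional (Q * Q)
      ≤ hw.functional (p * p) * (hu.functional (Q * Q) + c * hv.functional (Q * Q)) := by
        rwa [← sq]
    _ ≤ hw.functional (p * p) * (hu.functional (Q * Q) +
          c * (meixnerRate q ρ ^ p.natDegree * hu.functional (Q * Q))) := by
        gcongr
        · exact hw.functional_mul_self_nonneg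
            (sub_nonneg.2 (geometricWeight_mono (sq_nonneg ρ) hρq.le)) p
        · exact functional_monicMeixner_mul_self_le hq0 hq1 hρ hρq.le hu hv _
    _ = _ := by ring

theorem IsMonicOrthogonal.abs_functional_mul_self_div_sub_one_le (hq0 : 0 < q) (hq1 : q < 1)
    (hρ : 0 ≤ ρ) (hρq : ρ ^ 2 < q) (hp : IsMonicOrthogonal hw.functional p) :
    |hw.functional (p * p) * (1 - q) ^ (2 * p.natDegree + 1) /
        ((p.natDegree ! : ℝ) ^ 2 * q ^ (p.natDegree + 1)) - 1| ≤
      q / (q - ρ ^ 2) * meixnerRate q ρ ^ p.natDegree := by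
  have hu : HasMoments (geometricWeight q) := .geometric (by rwa [norm_of_nonneg hq0.le])
  have hv : HasMoments (geometricWeight (ρ ^ 2)) :=
    .geometric (by rw [norm_of_nonneg (sq_nonneg ρ)]; exact hρq.trans hq1)
  have hupper := hp.functional_mul_self_le_monicMeixner hq1.ne (sq_nonneg ρ) hρq.le hu
  have hlower := hp.functional_monicMeixner_le hq0 hq1 hρ hρq hu hv
  rw [map_monicMeixner_mul_self hq0.ne' hq1.ne hu.functional_geometric] at hupper hlower
  set n := p.natDegree
  set H := q * n ! ^ 2 * q ^ n / (1 - q) ^ (2 * n + 1) with hH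
  set δ := q / (q - ρ ^ 2) * meixnerRate q ρ ^ n
  have hH_pos : 0 < H := by
    have := sub_pos.2 hq1
    positivity
  have hδ : 0 ≤ δ := mul_nonneg (div_nonneg hq0.le (sub_nonneg.2 hρq.le))
    (pow_nonneg (meixnerRate_pos hq0 hρ).le n)
  have hratio : hw.functional (p * p) * (1 - q) ^ (2 * n + 1) /
      ((n ! : ℝ) ^ 2 * q ^ (n + 1)) = hw.functional (p * p) / H := by
    rw [hH, div_div_eq_mul_div]
    ring
  rw [hratio, abs_sub_comm, abs_of_nonneg (sub_nonneg.2 ((div_le_one hH_pos).2 hupper)),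
    one_sub_div hH_pos.ne', div_le_iff₀ hH_pos]
  linarith [mul_le_mul_of_nonneg_left hupper hδ]

end Sandwich

section MainTheorem

open Polynomial

lemma exists_exp_neg_mul_le_mul_exp_neg_rpow {ε c : ℝ} (hε : 0 < ε) (hc : 0 < c) :
    ∃ M > 0, ∀ k : ℕ, exp (-c * k) ≤ M * exp (-(k : ℝ) ^ (1 - ε)) := by
  have hdecay : ∀ᶠ k : ℕ in atTop, (k : ℝ) ^ (1 - ε) - c * k ≤ 0 := by
    filter_upwards [tendsto_natCast_atTop_atTop.eventually
      ((tendsto_rpow_neg_atTop hε).eventually_le_const hc), eventually_gt_atTop 0] with k hk hk0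
    have hk0' : (0 : ℝ) < k := Nat.cast_pos.2 hk0
    rw [sub_nonpos, sub_eq_neg_add, rpow_add_one hk0'.ne']
    exact mul_le_mul_of_nonneg_right hk hk0'.le
  obtain ⟨B, hB⟩ := IsBoundedUnder.bddAbove_range ⟨0, eventually_map.2 hdecay⟩
  refine ⟨exp B, exp_pos B, fun k => ?_⟩
  rw [← exp_add, exp_le_exp]
  linarith [hB ⟨k, rfl⟩]

lemma ferroWeight_add_one (t γ : ℝ) (x : ℕ) :
    ferroWeight t γ (x + 1) =
      (geometricWeight (exp (2 * γ - 2 * t)) - geometricWeight (exp (-(t + γ)) ^ 2)) x := by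
  have hq : exp (2 * γ - 2 * t) ^ (x + 1) = exp (-2 * t * (x + 1)) * exp (2 * γ * (x + 1)) := by
    rw [← exp_nat_mul, ← exp_add]
    push_cast
    ring_nf
  have hρ : (exp (-(t + γ)) ^ 2) ^ (x + 1) =
      exp (-2 * t * (x + 1)) * exp (-(2 * γ * (x + 1))) := by
    rw [← exp_nat_mul, ← exp_nat_mul, ← exp_add]
    push_cast
    ring_nf
  rw [Pi.sub_apply, geometricWeight, geometricWeight, hq, hρ, ferroWeight, sinh_eq]
  ring

lemma isMonicOrthogonal_taylor_one {w : ℕ → ℝ} (hw : HasMoments w) {P : ℕ → ℝ[X]}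
    (hmonic : ∀ k, (P k).Monic) (hdeg : ∀ k, (P k).natDegree = k)
    (horth : ∀ i j, i < j →
      ∑' x : ℕ, (P i).eval ((x : ℝ) + 1) * (P j).eval ((x : ℝ) + 1) * w x = 0) (k : ℕ) :
    IsMonicOrthogonal hw.functional (taylor 1 (P k)) := by
  let S : Sequence ℝ :=
    { elems' := fun k => taylor 1 (P k)
      degree_eq' := fun k => by
        rw [degree_taylor, degree_eq_natDegree (hmonic k).ne_zero, hdeg] }
  refine .of_sequence S (fun k => (leadingCoeff_taylor 1 _).trans (hmonic k)) (fun i j hij => ?_) k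
  simpa [S, HasMoments.functional_apply, taylor_eval] using horth i j hij

variable {t γ : ℝ}

lemma sq_exp_neg_add_lt (hγ : 0 < γ) : exp (-(t + γ)) ^ 2 < exp (2 * γ - 2 * t) := by
  rw [← exp_nat_mul, exp_lt_exp]
  push_cast
  linarith

theorem abs_norming_constant_div_sub_one_le (hγ : 0 < γ) (hγt : γ < t) {P : ℕ → ℝ[X]}
    {h : ℕ → ℝ} (hmonic : ∀ k, (P k).Monic) (hdeg : ∀ k, (P k).natDegree = k)
    (horth : ∀ j k : ℕ,
      ∑' l : ℕ, (P j).eval ((l : ℝ) + 1) * (P k).eval ((l : ℝ) + 1) *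
        ferroWeight t γ ((l : ℝ) + 1) = if j = k then h k else 0) (k : ℕ) :
    |h k * (1 - exp (2 * γ - 2 * t)) ^ (2 * k + 1) /
        ((k.factorial : ℝ) ^ 2 * exp (2 * γ - 2 * t) ^ (k + 1)) - 1| ≤
      exp (2 * γ - 2 * t) / (exp (2 * γ - 2 * t) - exp (-(t + γ)) ^ 2) *
        meixnerRate (exp (2 * γ - 2 * t)) (exp (-(t + γ))) ^ k := by
  have hq1 : exp (2 * γ - 2 * t) < 1 := exp_lt_one_iff.2 (by linarith)
  have hρq : exp (-(t + γ)) ^ 2 < exp (2 * γ - 2 * t) := sq_exp_neg_add_lt hγ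
  have hw : HasMoments
      (geometricWeight (exp (2 * γ - 2 * t)) - geometricWeight (exp (-(t + γ)) ^ 2)) :=
    (HasMoments.geometric (by rwa [norm_of_nonneg (exp_pos _).le])).sub
      (.geometric (by rw [norm_of_nonneg (sq_nonneg _)]; exact hρq.trans hq1))
  simp only [ferroWeight_add_one] at horth
  have hp := isMonicOrthogonal_taylor_one hw hmonic hdeg
    (fun i j hij => (horth i j).trans (if_neg hij.ne)) k
  have hnorm : hw.functional (taylor 1 (P k) * taylor 1 (P k)) = h k := by
    simpa [HasMoments.functional_apply, taylor_eval] using horth k k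
  have hbound := hp.abs_functional_mul_self_div_sub_one_le (exp_pos _) hq1 (exp_pos _).le hρq
  rwa [hnorm, natDegree_taylor, hdeg] at hbound

lemma exists_mul_pow_le_mul_exp {X : Type*} [TopologicalSpace X] {K : Set X} (hK : IsCompact K)
    {f g : X → ℝ} (hf : ContinuousOn f K) (hg : ContinuousOn g K) (hg0 : ∀ x ∈ K, 0 < g x)
    (hg1 : ∀ x ∈ K, g x < 1) :
    ∃ M > 0, ∃ c > 0, ∀ x ∈ K, ∀ k : ℕ, f x * g x ^ k ≤ M * exp (-c * k) := by
  obtain ⟨B, hB⟩ := hK.bddAbove_image hf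
  obtain ⟨c, hc, hcg⟩ := hK.exists_forall_le' (hg.log fun x hx => (hg0 x hx).ne').neg
    (a := 0) fun x hx => neg_pos.2 (log_neg (hg0 x hx) (hg1 x hx))
  refine ⟨max B 1, by positivity, c, hc, fun x hx k => ?_⟩
  have hgc : g x ≤ exp (-c) := (log_le_iff_le_exp (hg0 x hx)).1 (le_neg.1 (hcg x hx))
  rw [mul_comm (-c), exp_nat_mul]
  exact mul_le_mul ((hB (Set.mem_image_of_mem f hx)).trans (le_max_left B 1))
    (pow_le_pow_left₀ (hg0 x hx).le hgc k) (pow_nonneg (hg0 x hx).le k) (by positivity)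

theorem norming_constant_asymptotics_general
    (K : Set (ℝ × ℝ)) (hKcpt : IsCompact K)
    (hKsub : K ⊆ {p : ℝ × ℝ | 0 < p.2 ∧ p.2 < p.1}) :
    ∃ M > 0, ∃ c > 0,
      ∀ t γ : ℝ, (t, γ) ∈ K →
        ∀ (P : ℕ → ℝ[X]) (h : ℕ → ℝ),
          (∀ k, (P k).Monic) →
          (∀ k, (P k).natDegree = k) →
          (∀ j k : ℕ,
            ∑' l : ℕ, (P j).eval ((l : ℝ) + 1) * (P k).eval ((l : ℝ) + 1) *
              ferroWeight t γ ((l : ℝ) + 1) = if j = k then h k else 0) →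
          ∀ k : ℕ,
            |h k * (1 - exp (2 * γ - 2 * t)) ^ (2 * k + 1) /
                ((k.factorial : ℝ) ^ 2 * exp (2 * γ - 2 * t) ^ (k + 1)) - 1| ≤
              M * exp (-c * k) := by
  set q : ℝ × ℝ → ℝ := fun p => exp (2 * p.2 - 2 * p.1)
  set ρ : ℝ × ℝ → ℝ := fun p => exp (-(p.1 + p.2))
  have hq0 (p : ℝ × ℝ) : 0 < q p := exp_pos _
  have hρ0 (p : ℝ × ℝ) : 0 < ρ p := exp_pos _
  have hρq (p) (hp : p ∈ K) : ρ p ^ 2 < q p := sq_exp_neg_add_lt (hKsub hp).1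
  have hq1 (p) (hp : p ∈ K) : q p < 1 := exp_lt_one_iff.2 (by linarith [(hKsub hp).2])
  have hprefactor : ContinuousOn (fun p => q p / (q p - ρ p ^ 2)) K :=
    .div (by fun_prop) (by fun_prop) fun p hp => (sub_pos.2 (hρq p hp)).ne'
  have hrate : Continuous fun p => meixnerRate (q p) (ρ p) :=
    .mul (by fun_prop) (.pow (.div (.add (by fun_prop) (.div (by fun_prop) (by fun_prop)
      fun p => (hq0 p).ne')) (by fun_prop) fun p => (add_pos one_pos (hρ0 p)).ne') 2)
  obtain ⟨M, hM, c, hc, hMc⟩ := exists_mul_pow_le_mul_exp hKcpt hprefactor hrate.continuousOn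
    (fun p _ => meixnerRate_pos (hq0 p) (hρ0 p).le)
    (fun p hp => meixnerRate_lt_one (hq0 p) (hq1 p hp) (hρ0 p).le (hρq p hp))
  exact ⟨M, hM, c, hc, fun t γ hK P h hmonic hdeg horth k =>
    (abs_norming_constant_div_sub_one_le (hKsub hK).1 (hKsub hK).2 hmonic hdeg horth k).trans
      (hMc (t, γ) hK k)⟩

end MainTheorem

/-- **Theorem (asymptotics of the norming constants).**
For every `ε ∈ (0,1)` and every compact subset `K` of `{(t,γ) : 0 < γ < t}`, there is an
`M > 0` such that for all `(t,γ) ∈ K` and all `k ≥ 1` the norming constants `h k` of the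
monic orthogonal polynomials for the weight `w` satisfy
`|h k (1-q)^{2k+1} / ((k!)² q^{k+1}) - 1| ≤ M e^{-k^{1-ε}}`, where `q = e^{2γ-2t}`. -/
theorem norming_constant_asymptotics
    (ε : ℝ) (hε0 : 0 < ε) (hε1 : ε < 1)
    (K : Set (ℝ × ℝ)) (hKcpt : IsCompact K)
    (hKsub : K ⊆ {p : ℝ × ℝ | 0 < p.2 ∧ p.2 < p.1}) :
    ∃ M : ℝ, 0 < M ∧
      ∀ t γ : ℝ, (t, γ) ∈ K →
        ∀ (P : ℕ → Polynomial ℝ) (h : ℕ → ℝ),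
          (∀ k, (P k).Monic) →
          (∀ k, (P k).natDegree = k) →
          (∀ j k : ℕ,
            ∑' l : ℕ, (P j).eval ((l : ℝ) + 1) * (P k).eval ((l : ℝ) + 1) *
              ferroWeight t γ ((l : ℝ) + 1) = if j = k then h k else 0) →
          ∀ k : ℕ, 1 ≤ k →
            |h k * (1 - Real.exp (2 * γ - 2 * t)) ^ (2 * k + 1) /
                ((Nat.factorial k : ℝ) ^ 2 * Real.exp (2 * γ - 2 * t) ^ (k + 1)) - 1| ≤
              M * Real.exp (-(k : ℝ) ^ (1 - ε)) := by
  obtain ⟨M, hM, c, hc, hMc⟩ := norming_constant_asymptotics_general K hKcpt hKsub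
  obtain ⟨B, hB, hBc⟩ := exists_exp_neg_mul_le_mul_exp_neg_rpow hε0 hc
  refine ⟨M * B, mul_pos hM hB, fun t γ hK P h hmonic hdeg horth k _ => ?_⟩
  rw [mul_assoc]
  exact (hMc t γ hK P h hmonic hdeg horth k).trans (mul_le_mul_of_nonneg_left (hBc k) hM.le)
end

section
/- For fixed t > γ > 0 there exists a constant C > 0 (depending on t and γ) such that for every ε ∈ (0,1) there exists M > 0 with |Z_n / (F^{n²} G^n) − C| ≤ M e^{−n^{1−ε}} for all n ≥ 1, where F = sinh(t+γ) and G = e^{γ−t}. That is, Z_n = C F^{n²} G^n (1 + O(e^{−n^{1−ε}})) as n → ∞. -/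
open Real Filter Finset

/-- `φ(s) = sinh(2γ)/(sinh(s+γ) sinh(s-γ))`. -/
noncomputable def phiSV (γ s : ℝ) : ℝ :=
  Real.sinh (2 * γ) / (Real.sinh (s + γ) * Real.sinh (s - γ))

/-- The Hankel determinant `τ_n = det(φ^{(j+k-2)}(t))_{1 ≤ j,k ≤ n}`. -/
noncomputable def tauSV (n : ℕ) (t γ : ℝ) : ℝ :=
  Matrix.det (Matrix.of fun j k : Fin n => iteratedDeriv ((j : ℕ) + (k : ℕ)) (phiSV γ) t)

/-- Izergin's formula for the partition function of the six-vertex model with DWBC,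
ferroelectric parametrization. -/
noncomputable def ZSV (n : ℕ) (t γ : ℝ) : ℝ :=
  (Real.sinh (t - γ) * Real.sinh (t + γ)) ^ (n ^ 2) * tauSV n t γ /
    (∏ j ∈ Finset.range n, (Nat.factorial j : ℝ)) ^ 2

/-!
By `phiSV γ s = coth (s - γ) - coth (s + γ)`, the derivatives of `phiSV γ` at `t` are moments of a
difference of two geometric weights on `ℕ`, with ratios `p ^ 2` and `(p * s) ^ 2` for
`p = exp (γ - t)` and `s = exp (-2 * γ)`. The Hankel determinant is therefore a Gram determinant,
and in the Meixner polynomials, which are orthogonal for the first weight, it becomes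
`p ^ n * det (1 - A_n)` up to elementary factors, where `A_n` is the upper left corner of a matrix
`A` with `0 ≤ A ≤ s ^ 2 < 1`. The quotient of consecutive determinants is a diagonal entry of
`(1 - A_n)⁻¹`, and `1 ≤ (1 - A_n)⁻¹ ≤ 1 + A_n / (1 - s ^ 2)`. As the diagonal of `A` decays
geometrically, the determinants converge geometrically fast to a positive limit.
-/

theorem exists_pow_le_mul_exp_neg_rpow {ρ a : ℝ} (hρ₀ : 0 < ρ) (hρ₁ : ρ < 1) (ha : a < 1) :
    ∃ M > 0, ∀ n : ℕ, ρ ^ n ≤ M * exp (-(n : ℝ) ^ a) := by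
  have hlog : 0 < -log ρ := neg_pos.2 (log_neg hρ₀ hρ₁)
  have hrpow : ∀ᶠ n : ℕ in atTop, (n : ℝ) ^ a ≤ n * -log ρ := by
    have hlim : Tendsto (fun n : ℕ => (n : ℝ) ^ (-(1 - a))) atTop (nhds 0) :=
      (tendsto_rpow_neg_atTop (sub_pos.2 ha)).comp tendsto_natCast_atTop_atTop
    filter_upwards [hlim.eventually_le_const hlog, eventually_gt_atTop 0] with n hn hpos
    have hn₀ : (0 : ℝ) < n := Nat.cast_pos.2 hpos
    calc (n : ℝ) ^ a = n * (n : ℝ) ^ (-(1 - a)) := by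
          rw [neg_sub, rpow_sub_one hn₀.ne', mul_div_cancel₀ _ hn₀.ne']
      _ ≤ n * -log ρ := by gcongr
  have hbigO : (fun n : ℕ => ρ ^ n) =O[atTop] fun n : ℕ => exp (-(n : ℝ) ^ a) := by
    refine .of_bound 1 (hrpow.mono fun n hn => ?_)
    rw [one_mul, norm_of_nonneg (by positivity), norm_of_nonneg (exp_pos _).le,
      ← exp_log (pow_pos hρ₀ n), log_pow]
    exact exp_le_exp.2 (by linarith)
  obtain ⟨M, hM, hbound⟩ := Asymptotics.bound_of_isBigO_nat_atTop hbigO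
  refine ⟨M, hM, fun n => ?_⟩
  simpa [abs_of_pos hρ₀] using hbound (x := n) (exp_pos _).ne'

theorem exists_pos_abs_sub_le_geometric {D : ℕ → ℝ} {K ρ : ℝ} (hρ₀ : 0 ≤ ρ) (hρ₁ : ρ < 1)
    (hpos : ∀ n, 0 < D n) (hD : Antitone D)
    (hstep : ∀ n, D n ≤ D (n + 1) * (1 + K * ρ ^ n)) :
    ∃ C > 0, ∃ M > 0, ∀ n, |D n - C| ≤ M * ρ ^ n := by
  set C := ⨅ n, D n
  have hlim : Tendsto D atTop (nhds C) :=
    tendsto_atTop_ciInf hD ⟨0, by rintro _ ⟨n, rfl⟩; exact (hpos n).le⟩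
  have hK : 0 ≤ K := by
    have hD₁ : D 1 ≤ D 1 * (1 + K) := by simpa using (hD zero_le_one).trans (hstep 0)
    have : 0 ≤ D 1 * K := by linarith
    exact nonneg_of_mul_nonneg_right this (hpos 1)
  have hdist (m n : ℕ) : dist (D (m + n)) (D (m + (n + 1))) ≤ D m * K * ρ ^ m * ρ ^ n := by
    rw [dist_eq, abs_of_nonneg (sub_nonneg.2 (hD (by omega)))]
    have : D (m + n + 1) * (K * ρ ^ (m + n)) ≤ D m * (K * ρ ^ (m + n)) := by
      gcongr
      exact hD (by omega)
    have := hstep (m + n)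
    rw [← add_assoc, mul_assoc, mul_assoc, ← pow_add]
    linarith
  have htail (m : ℕ) : |D m - C| ≤ D m * K * ρ ^ m / (1 - ρ) := by
    simpa [← dist_eq] using dist_le_of_le_geometric_of_tendsto₀ ρ _ hρ₁ (hdist m)
      ((tendsto_add_atTop_iff_nat m).2 hlim |>.congr fun n => by rw [add_comm])
  have hgeom : Tendsto (fun m => K * ρ ^ m / (1 - ρ)) atTop (nhds 0) := by
    simpa using ((tendsto_pow_atTop_nhds_zero_of_lt_one hρ₀ hρ₁).const_mul K).div_const (1 - ρ)
  obtain ⟨m, hm⟩ := (hgeom.eventually_lt_const one_pos).exists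
  have hCpos : 0 < C := by
    have hdrop : D m - C ≤ D m * (K * ρ ^ m / (1 - ρ)) :=
      ((le_abs_self _).trans (htail m)).trans_eq (by ring)
    have hsmall : D m * (K * ρ ^ m / (1 - ρ)) < D m := mul_lt_of_lt_one_right (hpos m) hm
    linarith
  have : 0 < 1 - ρ := sub_pos.2 hρ₁
  refine ⟨C, hCpos, D 0 * K / (1 - ρ) + 1, by have := hpos 0; positivity, fun n => ?_⟩
  calc |D n - C| ≤ D n * K * ρ ^ n / (1 - ρ) := htail n
    _ ≤ D 0 * K * ρ ^ n / (1 - ρ) := by gcongr; exact hD n.zero_le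
    _ ≤ (D 0 * K / (1 - ρ) + 1) * ρ ^ n := by
      have : 0 ≤ ρ ^ n := by positivity
      rw [add_mul, div_mul_eq_mul_div]; linarith

section CornerDeterminants

theorem det_submatrix_castSucc {R : Type*} [CommRing R] {n : ℕ}
    {B : Matrix (Fin (n + 1)) (Fin (n + 1)) R} (hB : IsUnit B.det) :
    (B.submatrix Fin.castSucc Fin.castSucc).det = B.det * B⁻¹ (Fin.last n) (Fin.last n) := by
  rw [Matrix.inv_def, Matrix.smul_apply, smul_eq_mul, Ring.mul_inverse_cancel_left _ _ hB,
    Matrix.adjugate_fin_succ_eq_det_submatrix, (Even.add_self _).neg_one_pow, one_mul,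
    Fin.succAbove_last]

theorem inv_one_sub_mul {ι R : Type*} [Fintype ι] [DecidableEq ι] [CommRing R] {A : Matrix ι ι R}
    (h : IsUnit (1 - A).det) : (1 - A)⁻¹ * A = (1 - A)⁻¹ - 1 := by
  calc (1 - A)⁻¹ * A = (1 - A)⁻¹ * (1 - (1 - A)) := by rw [sub_sub_cancel]
    _ = (1 - A)⁻¹ - 1 := by rw [mul_sub, mul_one, Matrix.nonsing_inv_mul _ h]

theorem commute_inv_one_sub {ι R : Type*} [Fintype ι] [DecidableEq ι] [CommRing R]
    {A : Matrix ι ι R} (h : IsUnit (1 - A).det) : Commute (1 - A)⁻¹ A := by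
  have hself : Commute (1 - A)⁻¹ (1 - A) :=
    (Matrix.nonsing_inv_mul _ h).trans (Matrix.mul_nonsing_inv _ h).symm
  simpa only [sub_sub_cancel] using (Commute.one_right _).sub_right hself

open scoped MatrixOrder Matrix.Norms.L2Operator in
theorem posSemidef_mul_of_commute {ι : Type*} [Fintype ι] {A B : Matrix ι ι ℝ}
    (hA : A.PosSemidef) (hB : B.PosSemidef) (h : Commute A B) : (A * B).PosSemidef := by
  classical exact Matrix.nonneg_iff_posSemidef.1 (h.mul_nonneg hA.nonneg hB.nonneg)

variable {ι : Type*} [DecidableEq ι] {A : Matrix ι ι ℝ} {r : ℝ}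

theorem posDef_one_sub (hr : r < 1) (hAr : (r • (1 : Matrix ι ι ℝ) - A).PosSemidef) :
    (1 - A).PosDef := by
  have h := (Matrix.PosDef.one.smul (sub_pos.2 hr)).add_posSemidef hAr
  rwa [sub_smul, one_smul, sub_add_sub_cancel] at h

theorem posSemidef_inv_one_sub_sub_one [Fintype ι] (hr : r < 1) (hA : A.PosSemidef)
    (hAr : (r • (1 : Matrix ι ι ℝ) - A).PosSemidef) : ((1 - A)⁻¹ - 1).PosSemidef := by
  have hB := posDef_one_sub hr hAr
  have hdet := hB.det_pos.ne'.isUnit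
  rw [← inv_one_sub_mul hdet]
  exact posSemidef_mul_of_commute hB.inv.posSemidef hA (commute_inv_one_sub hdet)

theorem posSemidef_one_add_sub_inv_one_sub [Fintype ι] (hr : r < 1) (hA : A.PosSemidef)
    (hAr : (r • (1 : Matrix ι ι ℝ) - A).PosSemidef) :
    (1 + (1 - r)⁻¹ • A - (1 - A)⁻¹).PosSemidef := by
  have hr' : 1 - r ≠ 0 := (sub_pos.2 hr).ne'
  have hdet := (posDef_one_sub hr hAr).det_pos.ne'.isUnit
  have hmul : (1 - r)⁻¹ • (((1 - A)⁻¹ - 1) * (r • 1 - A)) = 1 + (1 - r)⁻¹ • A - (1 - A)⁻¹ := by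
    rw [inv_smul_eq_iff₀ hr', mul_sub, sub_mul _ _ A, inv_one_sub_mul hdet, mul_smul_comm, mul_one,
      one_mul]
    match_scalars <;> field_simp <;> ring
  have hcomm : Commute ((1 - A)⁻¹ - 1) (r • 1 - A) :=
    .sub_left (.sub_right ((Commute.one_right _).smul_right r) (commute_inv_one_sub hdet))
      (Commute.one_left _)
  rw [← hmul]
  exact (posSemidef_mul_of_commute (posSemidef_inv_one_sub_sub_one hr hA hAr) hAr hcomm).smul
    (inv_nonneg.2 (sub_pos.2 hr).le)

/-- The `n × n` upper left corner of an infinite matrix. -/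
def corner {R : Type*} (A : Matrix ℕ ℕ R) (n : ℕ) : Matrix (Fin n) (Fin n) R :=
  A.submatrix Fin.val Fin.val

theorem submatrix_smul_one_sub {m ι R : Type*} [DecidableEq m] [DecidableEq ι] [Ring R] {f : m → ι}
    (hf : f.Injective) (r : R) (A : Matrix ι ι R) :
    (r • (1 : Matrix ι ι R) - A).submatrix f f = r • 1 - A.submatrix f f :=
  congrArg (fun B => r • B - A.submatrix f f) (Matrix.submatrix_one f hf)

theorem det_one_sub_corner_eq {R : Type*} [CommRing R] (A : Matrix ℕ ℕ R) (n : ℕ)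
    (h : IsUnit (1 - corner A (n + 1)).det) :
    (1 - corner A n).det =
      (1 - corner A (n + 1)).det * (1 - corner A (n + 1))⁻¹ (Fin.last n) (Fin.last n) := by
  have hsub := submatrix_smul_one_sub (Fin.castSucc_injective n) 1 (corner A (n + 1))
  simp only [one_smul] at hsub
  rw [← det_submatrix_castSucc h, hsub]
  rfl

theorem exists_pos_abs_det_one_sub_corner_sub_le {A : Matrix ℕ ℕ ℝ} {r K ρ : ℝ} (hr : r < 1)
    (hA : A.PosSemidef) (hAr : (r • (1 : Matrix ℕ ℕ ℝ) - A).PosSemidef) (hρ₀ : 0 ≤ ρ) (hρ₁ : ρ < 1)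
    (hdiag : ∀ n, A n n ≤ K * ρ ^ n) :
    ∃ C > 0, ∃ M > 0, ∀ n, |(1 - corner A n).det - C| ≤ M * ρ ^ n := by
  have hpos (n : ℕ) : (corner A n).PosSemidef := hA.submatrix _
  have hle (n : ℕ) : (r • 1 - corner A n).PosSemidef := by
    have h := hAr.submatrix (Fin.val : Fin n → ℕ)
    rwa [submatrix_smul_one_sub Fin.val_injective] at h
  have hdet (n : ℕ) : 0 < (1 - corner A n).det := (posDef_one_sub hr (hle n)).det_pos
  have hratio (n : ℕ) := det_one_sub_corner_eq A n (hdet (n + 1)).ne'.isUnit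
  have hlower (n : ℕ) : 1 ≤ (1 - corner A (n + 1))⁻¹ (Fin.last n) (Fin.last n) := by
    simpa using (posSemidef_inv_one_sub_sub_one hr (hpos (n + 1)) (hle (n + 1))).diag_nonneg
      (i := Fin.last n)
  have hupper (n : ℕ) :
      (1 - corner A (n + 1))⁻¹ (Fin.last n) (Fin.last n) ≤ 1 + (1 - r)⁻¹ * A n n := by
    simpa [corner] using
      (posSemidef_one_add_sub_inv_one_sub hr (hpos (n + 1)) (hle (n + 1))).diag_nonneg
        (i := Fin.last n)
  refine exists_pos_abs_sub_le_geometric (K := (1 - r)⁻¹ * K) hρ₀ hρ₁ hdet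
    (antitone_nat_of_succ_le fun n => ?_) fun n => ?_
  · rw [hratio n]
    exact le_mul_of_one_le_right (hdet _).le (hlower n)
  · have : 0 ≤ (1 - r)⁻¹ := inv_nonneg.2 (sub_pos.2 hr).le
    rw [hratio n, mul_assoc]
    gcongr
    · exact (hdet _).le
    · exact (hupper n).trans (by gcongr; exact hdiag n)

end CornerDeterminants

section MomentGram

open Polynomial

/-- The Gram matrix of the polynomials `P j` for the bilinear form `(p, q) ↦ L (p * q)`; for
`P j = X ^ j` it is the Hankel matrix of the moments of `L`. -/
noncomputable def momentGram {R : Type*} [CommRing R] (L : R[X] →ₗ[R] R) (P : ℕ → R[X]) :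
    Matrix ℕ ℕ R :=
  Matrix.of fun j k => L (P j * P k)

theorem momentGram_eq_mul {R : Type*} [CommRing R] (L : R[X] →ₗ[R] R) {P : ℕ → R[X]}
    (hP : ∀ i, (P i).natDegree ≤ i) (n : ℕ) :
    corner (momentGram L P) n =
      (Matrix.of fun i j : Fin n => (P j).coeff i).transpose *
        (corner (momentGram L (X ^ ·)) n * Matrix.of fun i j : Fin n => (P j).coeff i) := by
  have hsum (j : Fin n) : P j = ∑ a : Fin n, (P j).coeff a • X ^ (a : ℕ) := by
    conv_lhs => rw [as_sum_range_C_mul_X_pow' _ ((hP j).trans_lt j.2)]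
    simp only [← smul_eq_C_mul, Fin.sum_univ_eq_sum_range fun a => (P j).coeff a • (X : R[X]) ^ a]
  ext j k
  calc L (P j * P k)
      = L ((∑ a : Fin n, (P j).coeff a • X ^ (a : ℕ)) *
          ∑ b : Fin n, (P k).coeff b • X ^ (b : ℕ)) := by
        rw [← hsum, ← hsum]
    _ = ∑ a : Fin n, ∑ b : Fin n,
          (P j).coeff a * (L (X ^ (a : ℕ) * X ^ (b : ℕ)) * (P k).coeff b) := by
        simp only [sum_mul_sum, map_sum, smul_mul_smul_comm, map_smul, smul_eq_mul]
        exact sum_congr rfl fun a _ => sum_congr rfl fun b _ => by ring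
    _ = _ := by
        simp only [Matrix.mul_apply, mul_sum, Matrix.transpose_apply, Matrix.of_apply, corner,
          Matrix.submatrix_apply, momentGram]

theorem det_corner_momentGram {R : Type*} [CommRing R] (L : R[X] →ₗ[R] R) {P : ℕ → R[X]}
    (hP : ∀ i, (P i).natDegree ≤ i) (n : ℕ) :
    (corner (momentGram L P) n).det =
      (∏ i ∈ range n, (P i).coeff i) ^ 2 * (corner (momentGram L (X ^ ·)) n).det := by
  have htri : (Matrix.of fun i j : Fin n => (P j).coeff i).det = ∏ i ∈ range n, (P i).coeff i := by
    rw [Matrix.det_of_isUpperTriangular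
      (Matrix.matrixOfPolynomials_blockTriangular (fun j : Fin n => P j) fun i => hP i)]
    exact Fin.prod_univ_eq_prod_range (fun i => (P i).coeff i) n
  rw [momentGram_eq_mul L hP, Matrix.det_mul, Matrix.det_mul, Matrix.det_transpose, htri]
  ring

theorem posSemidef_momentGram {L : ℝ[X] →ₗ[ℝ] ℝ} (hL : ∀ p, 0 ≤ L (p * p)) (P : ℕ → ℝ[X]) :
    (momentGram L P).PosSemidef := by
  refine ⟨Matrix.IsHermitian.ext fun j k => by simp [momentGram, mul_comm], fun x => ?_⟩
  have hx : (x.sum fun i xi => x.sum fun j xj => star xi * momentGram L P i j * xj) =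
      L ((x.sum fun i xi => xi • P i) * x.sum fun j xj => xj • P j) := by
    simp only [Finsupp.sum, sum_mul_sum, map_sum, smul_mul_smul_comm, map_smul, smul_eq_mul]
    exact sum_congr rfl fun a _ => sum_congr rfl fun b _ => by
      simp only [momentGram, star_trivial, Matrix.of_apply]; ring
  exact hx ▸ hL _

end MomentGram

section GeomMoment

open Polynomial

/-- The functional `p ↦ ∑ l, z ^ l * p l` on polynomials, that is, integration against the geometric
weight `z ^ l` on `ℕ`; it is meaningful for `|z| < 1`. -/
noncomputable def geomMoment (z : ℝ) : ℝ[X] →ₗ[ℝ] ℝ :=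
  lsum fun k => (∑' l : ℕ, (l : ℝ) ^ k * z ^ l) • LinearMap.id

variable {z : ℝ}

theorem hasSum_geomMoment (hz : |z| < 1) (p : ℝ[X]) :
    HasSum (fun l : ℕ => z ^ l * p.eval (l : ℝ)) (geomMoment z p) := by
  induction p using Polynomial.induction_on' with
  | add p q hp hq => simpa only [eval_add, mul_add, map_add] using hp.add hq
  | monomial k a =>
    have hsum := (summable_pow_mul_geometric_of_norm_lt_one k (r := z) hz).hasSum.mul_right a
    have hval : geomMoment z (monomial k a) = (∑' l : ℕ, (l : ℝ) ^ k * z ^ l) * a := by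
      simp [geomMoment, lsum_apply, sum_monomial_index]
    rw [hval]
    exact hsum.congr_fun fun l => by simp only [eval_monomial]; ring

theorem geomMoment_eq_eval_zero_add (hz : |z| < 1) (p : ℝ[X]) :
    geomMoment z p = p.eval 0 + z * geomMoment z (p.comp (X + 1)) := by
  have h := (hasSum_geomMoment hz (p.comp (X + 1))).mul_left z
  have hshift : HasSum (fun l : ℕ => z ^ (l + 1) * p.eval ((l + 1 : ℕ) : ℝ))
      (z * geomMoment z (p.comp (X + 1))) := by
    simpa [pow_succ', mul_assoc] using h
  have := hshift.zero_add (f := fun l : ℕ => z ^ l * p.eval (l : ℝ))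
  simpa using (hasSum_geomMoment hz p).unique this

theorem geomMoment_one (hz : |z| < 1) : geomMoment z 1 = (1 - z)⁻¹ :=
  (hasSum_geomMoment hz 1).unique (by simpa using hasSum_geometric_of_abs_lt_one hz)

theorem geomMoment_mul_self_nonneg (hz₀ : 0 ≤ z) (hz₁ : z < 1) (p : ℝ[X]) :
    0 ≤ geomMoment z (p * p) :=
  (hasSum_geomMoment (abs_lt.2 ⟨by linarith, hz₁⟩) _).nonneg fun l => by
    rw [eval_mul]; exact mul_nonneg (by positivity) (mul_self_nonneg _)

theorem geomMoment_mul_self_mono {z' : ℝ} (hz₀ : 0 ≤ z) (hz : z ≤ z') (hz' : z' < 1) (p : ℝ[X]) :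
    geomMoment z (p * p) ≤ geomMoment z' (p * p) := by
  refine hasSum_le (fun l => ?_)
    (hasSum_geomMoment (abs_lt.2 ⟨by linarith, by linarith⟩) _)
    (hasSum_geomMoment (abs_lt.2 ⟨by linarith, hz'⟩) _)
  rw [eval_mul]
  gcongr
  exact mul_self_nonneg _

end GeomMoment

section CoeffPairing

open Polynomial

variable {R : Type*} [CommRing R]

/-- The diagonal bilinear form `(f, g) ↦ ∑ i, f_i g_i y ^ i` on coefficient sequences. Both the
values of Meixner polynomials at integers and their Gram matrices for geometric weights are pairings
of powers of `X + C x`, as they obey the recurrence `coeffPairing_X_add_C_pow_succ`. -/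
noncomputable def coeffPairing (y : R) : R[X] →ₗ[R] R[X] →ₗ[R] R :=
  lsum fun i => LinearMap.toSpanSingleton R (R[X] →ₗ[R] R) (y ^ i • lcoeff R i)

theorem coeffPairing_eq_sum_range (y : R) {f : R[X]} {n : ℕ} (hf : f.natDegree < n) (g : R[X]) :
    coeffPairing y f g = ∑ i ∈ range n, f.coeff i * g.coeff i * y ^ i := by
  rw [coeffPairing, lsum_apply, sum_over_range' f (fun i => map_zero _) n hf, LinearMap.sum_apply]
  exact sum_congr rfl fun i _ => by
    simp only [LinearMap.toSpanSingleton_apply, LinearMap.smul_apply, lcoeff_apply, smul_eq_mul]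
    ring

theorem coeffPairing_mul_X_mul_X (y : R) (f g : R[X]) :
    coeffPairing y (f * X) (g * X) = y * coeffPairing y f g := by
  have hdeg : (f * X).natDegree < f.natDegree + 1 + 1 :=
    Nat.lt_succ_of_le (natDegree_mul_le.trans (by gcongr; exact natDegree_X_le))
  rw [coeffPairing_eq_sum_range y hdeg, coeffPairing_eq_sum_range y (Nat.lt_succ_self _),
    sum_range_succ', mul_sum]
  simp only [coeff_mul_X, coeff_mul_X_zero, zero_mul, add_zero]
  exact sum_congr rfl fun i _ => by ring

theorem coeffPairing_one_left (y : R) (g : R[X]) : coeffPairing y 1 g = g.coeff 0 := by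
  rw [coeffPairing_eq_sum_range y (n := 1) (by simp)]
  simp

theorem coeffPairing_comm (y : R) (f g : R[X]) : coeffPairing y f g = coeffPairing y g f := by
  rw [coeffPairing_eq_sum_range y (Nat.lt_succ_of_le (le_max_left f.natDegree g.natDegree)),
    coeffPairing_eq_sum_range y (Nat.lt_succ_of_le (le_max_right f.natDegree g.natDegree))]
  simp only [mul_comm]

theorem coeffPairing_X_add_C_pow_succ (x y : R) (j k : ℕ) :
    coeffPairing y ((X + C x) ^ (j + 1)) ((X + C x) ^ (k + 1)) =
      x * coeffPairing y ((X + C x) ^ j) ((X + C x) ^ (k + 1)) +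
        x * coeffPairing y ((X + C x) ^ (j + 1)) ((X + C x) ^ k) +
        (y - x ^ 2) * coeffPairing y ((X + C x) ^ j) ((X + C x) ^ k) := by
  have hX := coeffPairing_mul_X_mul_X y ((X + C x) ^ j) ((X + C x) ^ k)
  simp only [pow_succ _ j, pow_succ _ k, mul_add, map_add, LinearMap.add_apply, mul_comm _ (C x),
    ← smul_eq_C_mul, map_smul, LinearMap.smul_apply, smul_eq_mul, hX]
  ring

theorem coeffPairing_X_add_C_pow_zero_left (x y : R) (k : ℕ) :
    coeffPairing y ((X + C x) ^ 0) ((X + C x) ^ k) = x ^ k := by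
  simp [coeffPairing_one_left, coeff_zero_eq_eval_zero]

theorem coeffPairing_X_pow (y : R) (j k : ℕ) :
    coeffPairing y (X ^ j) (X ^ k) = if j = k then y ^ j else 0 := by
  rw [coeffPairing_eq_sum_range y (Nat.lt_succ_of_le (natDegree_X_pow_le j))]
  simp only [coeff_X_pow, ite_mul, one_mul, zero_mul]
  rw [sum_ite_eq', if_pos (self_mem_range_succ j)]

theorem coeffPairing_sq_self_le {y : ℝ} (hy : 0 ≤ y) {f : ℝ[X]} (hf : ∀ i, 0 ≤ f.coeff i) :
    coeffPairing (y ^ 2) f f ≤ f.eval y ^ 2 := by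
  rw [coeffPairing_eq_sum_range _ (Nat.lt_succ_self _), eval_eq_sum_range]
  calc ∑ i ∈ range (f.natDegree + 1), f.coeff i * f.coeff i * (y ^ 2) ^ i
      = ∑ i ∈ range (f.natDegree + 1), (f.coeff i * y ^ i) ^ 2 := sum_congr rfl fun i _ => by ring
    _ ≤ (∑ i ∈ range (f.natDegree + 1), f.coeff i * y ^ i) ^ 2 :=
      sum_sq_le_sq_sum_of_nonneg fun i _ => mul_nonneg (hf i) (pow_nonneg hy i)

theorem coeffPairing_sq_X_add_C_pow_self_le {x y : ℝ} (hx : 0 ≤ x) (hy : 0 ≤ y) (n : ℕ) :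
    coeffPairing (y ^ 2) ((X + C x) ^ n) ((X + C x) ^ n) ≤ (y + x) ^ (n + n) := by
  have hcoeff (i : ℕ) : 0 ≤ ((X + C x) ^ n).coeff i := by
    rw [coeff_X_add_C_pow]; positivity
  have h := coeffPairing_sq_self_le hy hcoeff
  rwa [eval_pow, eval_add, eval_X, eval_C, ← pow_mul, mul_two] at h

end CoeffPairing

section Meixner

open Polynomial

variable {K : Type*} [Field K]

/-- The Meixner polynomial `₂F₁(-j, -X; 1; κ)`, which for `κ = 1 - 1 / q` is orthogonal with respect
to the weight `q ^ l` on `ℕ`. -/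
noncomputable def meixnerPoly (κ : K) (j : ℕ) : K[X] :=
  ∑ i ∈ range (j + 1), C (j.choose i * (κ ^ i / i.factorial)) * descPochhammer K i

theorem natDegree_meixnerPoly_le (κ : K) (j : ℕ) : (meixnerPoly κ j).natDegree ≤ j :=
  natDegree_sum_le_of_forall_le _ _ fun i hi =>
    (natDegree_C_mul_le _ _).trans <| by
      rw [descPochhammer_natDegree]; exact mem_range_succ_iff.1 hi

theorem coeff_meixnerPoly_self (κ : K) (j : ℕ) :
    (meixnerPoly κ j).coeff j = κ ^ j / j.factorial := by
  have hlow : ∀ i ∈ range j,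
      (C (j.choose i * (κ ^ i / i.factorial)) * descPochhammer K i).coeff j = 0 := fun i hi => by
    rw [coeff_C_mul, coeff_eq_zero_of_natDegree_lt (by simpa using hi), mul_zero]
  have hlead : (descPochhammer K j).coeff j = 1 := by
    simpa using (monic_descPochhammer K j).coeff_natDegree
  rw [meixnerPoly, finsetSum_coeff, sum_range_succ, sum_eq_zero hlow, coeff_C_mul, hlead]
  simp

theorem eval_natCast_meixnerPoly [CharZero K] (κ : K) (j l : ℕ) :
    (meixnerPoly κ j).eval (l : K) = coeffPairing κ ((X + C 1) ^ j) ((X + C 1) ^ l) := by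
  have hdeg : ((X + C (1 : K)) ^ j).natDegree < j + 1 := by
    rw [natDegree_pow_X_add_C]; exact j.lt_succ_self
  rw [coeffPairing_eq_sum_range κ hdeg, meixnerPoly, eval_finsetSum]
  refine sum_congr rfl fun i _ => ?_
  rw [eval_mul, eval_C, descPochhammer_eval_eq_descFactorial,
    Nat.descFactorial_eq_factorial_mul_choose, coeff_X_add_C_pow, coeff_X_add_C_pow]
  have hfact : (i.factorial : K) ≠ 0 := Nat.cast_ne_zero.2 i.factorial_ne_zero
  push_cast
  field_simp
  simp only [one_pow, mul_one]

theorem meixnerPoly_zero (κ : K) : meixnerPoly κ 0 = 1 := by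
  simp [meixnerPoly]

theorem eval_zero_meixnerPoly [CharZero K] (κ : K) (j : ℕ) : (meixnerPoly κ j).eval 0 = 1 := by
  have h := eval_natCast_meixnerPoly κ j 0
  rwa [Nat.cast_zero, coeffPairing_comm, coeffPairing_X_add_C_pow_zero_left, one_pow] at h

theorem meixnerPoly_succ_sub_comp [CharZero K] (κ : K) (j : ℕ) :
    (meixnerPoly κ (j + 1) - meixnerPoly κ j).comp (X + 1) =
      meixnerPoly κ (j + 1) + C (κ - 1) * meixnerPoly κ j := by
  refine eq_of_infinite_eval_eq _ _ ((Set.infinite_range_of_injective Nat.cast_injective).mono ?_)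
  rintro _ ⟨l, rfl⟩
  have h := coeffPairing_X_add_C_pow_succ 1 κ j l
  simp only [Set.mem_ofPred_eq, eval_comp, eval_sub, eval_add, eval_X, eval_one, eval_mul, eval_C,
    ← Nat.cast_add_one, eval_natCast_meixnerPoly, h]
  ring

theorem geomMoment_meixnerPoly_succ {z : ℝ} (hz : |z| < 1) (κ : ℝ) (j : ℕ) :
    (1 - z) * geomMoment z (meixnerPoly κ (j + 1)) =
      (1 + z * (κ - 1)) * geomMoment z (meixnerPoly κ j) := by
  have h := geomMoment_eq_eval_zero_add hz (meixnerPoly κ (j + 1) - meixnerPoly κ j)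
  rw [meixnerPoly_succ_sub_comp, eval_sub, eval_zero_meixnerPoly, eval_zero_meixnerPoly,
    ← smul_eq_C_mul, map_sub, map_add, map_smul, smul_eq_mul] at h
  linear_combination h

theorem geomMoment_meixnerPoly_succ_mul_succ {z : ℝ} (hz : |z| < 1) (κ : ℝ) (j k : ℕ) :
    (1 - z) * geomMoment z (meixnerPoly κ (j + 1) * meixnerPoly κ (k + 1)) =
      (1 + z * (κ - 1)) * (geomMoment z (meixnerPoly κ j * meixnerPoly κ (k + 1)) +
        geomMoment z (meixnerPoly κ (j + 1) * meixnerPoly κ k)) -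
      (1 - z * (κ - 1) ^ 2) * geomMoment z (meixnerPoly κ j * meixnerPoly κ k) := by
  have h := geomMoment_eq_eval_zero_add hz
    ((meixnerPoly κ (j + 1) - meixnerPoly κ j) * (meixnerPoly κ (k + 1) - meixnerPoly κ k))
  rw [mul_comp, meixnerPoly_succ_sub_comp, meixnerPoly_succ_sub_comp, eval_mul, eval_sub,
    eval_sub] at h
  simp only [eval_zero_meixnerPoly, ← smul_eq_C_mul, sub_mul, mul_sub, add_mul, mul_add,
    smul_mul_assoc, mul_smul_comm, map_sub, map_add, map_smul, smul_eq_mul] at h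
  linear_combination h

theorem geomMoment_meixnerPoly {z : ℝ} (hz : |z| < 1) (κ : ℝ) (j : ℕ) :
    geomMoment z (meixnerPoly κ j) = (1 + z * (κ - 1)) ^ j / (1 - z) ^ (j + 1) := by
  have hz' : 1 - z ≠ 0 := (sub_pos.2 (lt_of_abs_lt hz)).ne'
  induction j with
  | zero => simp [meixnerPoly_zero, geomMoment_one hz]
  | succ j ih =>
    refine mul_left_cancel₀ hz' ?_
    rw [geomMoment_meixnerPoly_succ hz, ih]
    field_simp
    ring

theorem geomMoment_meixnerPoly_mul {z : ℝ} (hz : |z| < 1) (κ : ℝ) (j k : ℕ) :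
    geomMoment z (meixnerPoly κ j * meixnerPoly κ k) =
      coeffPairing (z * κ ^ 2) ((X + C (1 + z * (κ - 1))) ^ j) ((X + C (1 + z * (κ - 1))) ^ k) /
        (1 - z) ^ (j + k + 1) := by
  have hz' : 1 - z ≠ 0 := (sub_pos.2 (lt_of_abs_lt hz)).ne'
  induction j generalizing k with
  | zero =>
    rw [meixnerPoly_zero, one_mul, geomMoment_meixnerPoly hz, coeffPairing_X_add_C_pow_zero_left,
      zero_add]
  | succ j ihj =>
    induction k with
    | zero =>
      rw [meixnerPoly_zero, mul_one, geomMoment_meixnerPoly hz, coeffPairing_comm,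
        coeffPairing_X_add_C_pow_zero_left, add_zero]
    | succ k ihk =>
      refine mul_left_cancel₀ hz' ?_
      rw [geomMoment_meixnerPoly_succ_mul_succ hz, ihj, ihj, ihk, coeffPairing_X_add_C_pow_succ]
      field_simp
      ring

end Meixner

section Compression

open Polynomial

/-- Polynomials orthogonal for the geometric weight `(p ^ 2) ^ l`, all with the same norm. -/
noncomputable def scaledMeixner (p : ℝ) (j : ℕ) : ℝ[X] :=
  p ^ j • meixnerPoly (1 - (p ^ 2)⁻¹) j

theorem natDegree_scaledMeixner_le (p : ℝ) (j : ℕ) : (scaledMeixner p j).natDegree ≤ j :=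
  (natDegree_smul_le _ _).trans (natDegree_meixnerPoly_le _ j)

theorem coeff_scaledMeixner_self {p : ℝ} (hp : p ≠ 0) (j : ℕ) :
    (scaledMeixner p j).coeff j = (p - p⁻¹) ^ j / j.factorial := by
  have hbase : p * (1 - (p ^ 2)⁻¹) = p - p⁻¹ := by field_simp
  rw [scaledMeixner, coeff_smul, coeff_meixnerPoly_self, smul_eq_mul, ← mul_div_assoc, ← mul_pow,
    hbase]

theorem geomMoment_scaledMeixner_mul {p z : ℝ} (hz : |z| < 1) (j k : ℕ) :
    geomMoment z (scaledMeixner p j * scaledMeixner p k) =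
      p ^ (j + k) * coeffPairing (z * (1 - (p ^ 2)⁻¹) ^ 2) ((X + C (1 - z * (p ^ 2)⁻¹)) ^ j)
        ((X + C (1 - z * (p ^ 2)⁻¹)) ^ k) / (1 - z) ^ (j + k + 1) := by
  have hx : 1 + z * (1 - (p ^ 2)⁻¹ - 1) = 1 - z * (p ^ 2)⁻¹ := by ring
  rw [scaledMeixner, scaledMeixner, smul_mul_smul_comm, map_smul, geomMoment_meixnerPoly_mul hz, hx,
    smul_eq_mul, ← pow_add, mul_div_assoc]

variable {p s : ℝ}

theorem momentGram_geomMoment_scaledMeixner (hp₀ : p ≠ 0) (hp₁ : |p| < 1) :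
    (1 - p ^ 2) • momentGram (geomMoment (p ^ 2)) (scaledMeixner p) = 1 := by
  have hp₂ : p ^ 2 < 1 := (sq_lt_one_iff_abs_lt_one p).2 hp₁
  have hz : |p ^ 2| < 1 := by rwa [abs_of_nonneg (sq_nonneg p)]
  have hp' : 1 - p ^ 2 ≠ 0 := (sub_pos.2 hp₂).ne'
  have hx : 1 - p ^ 2 * (p ^ 2)⁻¹ = 0 := by rw [mul_inv_cancel₀ (pow_ne_zero 2 hp₀), sub_self]
  have hy : p ^ 2 * (p ^ 2 * (1 - (p ^ 2)⁻¹) ^ 2) = (1 - p ^ 2) ^ 2 := by field_simp; ring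
  ext j k
  rw [Matrix.smul_apply, momentGram, Matrix.of_apply, geomMoment_scaledMeixner_mul hz, hx, C_0,
    add_zero, coeffPairing_X_pow, smul_eq_mul]
  split_ifs with hjk
  · rw [← hjk, Matrix.one_apply_eq, ← two_mul, pow_mul, ← mul_pow, hy,
      ← pow_mul, mul_div_assoc', ← pow_succ', div_self (pow_ne_zero _ hp')]
  · rw [Matrix.one_apply_ne hjk, mul_zero, zero_div, mul_zero]

/-- The matrix of multiplication by `s ^ (2 * l + 2)` in the orthonormal basis of
`ℓ²(ℕ, (p ^ 2) ^ l)` proportional to `scaledMeixner p`. -/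
noncomputable def compressionMatrix (p s : ℝ) : Matrix ℕ ℕ ℝ :=
  ((1 - p ^ 2) * s ^ 2) • momentGram (geomMoment ((p * s) ^ 2)) (scaledMeixner p)

theorem posSemidef_compressionMatrix (hp : |p| < 1) (hs : |s| < 1) :
    (compressionMatrix p s).PosSemidef := by
  have hp₂ := (sq_lt_one_iff_abs_lt_one p).2 hp
  have hs₂ := (sq_lt_one_iff_abs_lt_one s).2 hs
  have hps : (p * s) ^ 2 < 1 := by nlinarith [sq_nonneg p, sq_nonneg s]
  exact (posSemidef_momentGram (geomMoment_mul_self_nonneg (sq_nonneg _) hps) _).smul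
    (mul_nonneg (sub_nonneg.2 hp₂.le) (sq_nonneg s))

theorem posSemidef_sq_smul_one_sub_compressionMatrix (hp₀ : p ≠ 0) (hp₁ : |p| < 1) (hs : |s| < 1) :
    (s ^ 2 • 1 - compressionMatrix p s).PosSemidef := by
  have hp₂ := (sq_lt_one_iff_abs_lt_one p).2 hp₁
  have hs₂ := (sq_lt_one_iff_abs_lt_one s).2 hs
  have hps : (p * s) ^ 2 ≤ p ^ 2 := by nlinarith [sq_nonneg p, sq_nonneg s]
  have hpos := posSemidef_momentGram (L := geomMoment (p ^ 2) - geomMoment ((p * s) ^ 2))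
    (fun f => sub_nonneg.2 (geomMoment_mul_self_mono (sq_nonneg _) hps hp₂ f)) (scaledMeixner p)
  have heq : s ^ 2 • 1 - compressionMatrix p s = ((1 - p ^ 2) * s ^ 2) •
      momentGram (geomMoment (p ^ 2) - geomMoment ((p * s) ^ 2)) (scaledMeixner p) := by
    rw [← momentGram_geomMoment_scaledMeixner hp₀ hp₁, compressionMatrix]
    ext j k
    simp only [momentGram, Matrix.sub_apply, Matrix.smul_apply, Matrix.of_apply,
      LinearMap.sub_apply, smul_eq_mul]
    ring
  rw [heq]
  exact hpos.smul (mul_nonneg (sub_nonneg.2 hp₂.le) (sq_nonneg s))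

theorem geomMoment_scaledMeixner_mul_self_le (hp₀ : 0 < p) (hp₁ : p < 1) (hs₀ : 0 ≤ s) (hs₁ : s < 1)
    (n : ℕ) : geomMoment ((p * s) ^ 2) (scaledMeixner p n * scaledMeixner p n) ≤
      (((p + s) / (1 + p * s)) ^ 2) ^ n / (1 - (p * s) ^ 2) := by
  have hps : p * s < 1 := mul_lt_one_of_nonneg_of_lt_one_left hp₀.le hp₁ hs₁.le
  have hps₂ : (p * s) ^ 2 < 1 := pow_lt_one₀ (by positivity) hps two_ne_zero
  have hz : |(p * s) ^ 2| < 1 := by rwa [abs_of_nonneg (sq_nonneg _)]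
  have hx₀ : 0 ≤ 1 - s ^ 2 := sub_nonneg.2 (pow_le_one₀ hs₀ hs₁.le)
  have hp₂ : 0 ≤ 1 - p ^ 2 := sub_nonneg.2 (pow_le_one₀ hp₀.le hp₁.le)
  have hx : 1 - (p * s) ^ 2 * (p ^ 2)⁻¹ = 1 - s ^ 2 := by field_simp
  have hy : (p * s) ^ 2 * (1 - (p ^ 2)⁻¹) ^ 2 = (s * (1 - p ^ 2) / p) ^ 2 := by field_simp; ring
  have hfactor : p * (s * (1 - p ^ 2) / p + (1 - s ^ 2)) = (p + s) * (1 - p * s) := by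
    field_simp; ring
  have hsq : 1 - (p * s) ^ 2 = (1 + p * s) * (1 - p * s) := by ring
  have hdiv : (p + s) * (1 - p * s) / (1 - (p * s) ^ 2) = (p + s) / (1 + p * s) := by
    rw [hsq, mul_div_mul_right _ _ (sub_pos.2 hps).ne']
  rw [geomMoment_scaledMeixner_mul hz, hx, hy]
  calc p ^ (n + n) * coeffPairing ((s * (1 - p ^ 2) / p) ^ 2) ((X + C (1 - s ^ 2)) ^ n)
        ((X + C (1 - s ^ 2)) ^ n) / (1 - (p * s) ^ 2) ^ (n + n + 1)
      ≤ p ^ (n + n) * (s * (1 - p ^ 2) / p + (1 - s ^ 2)) ^ (n + n) /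
          (1 - (p * s) ^ 2) ^ (n + n + 1) := by
        have : 0 ≤ 1 - (p * s) ^ 2 := (sub_pos.2 hps₂).le
        gcongr
        exact coeffPairing_sq_X_add_C_pow_self_le hx₀ (by positivity) n
    _ = ((p + s) * (1 - p * s) / (1 - (p * s) ^ 2)) ^ (n + n) / (1 - (p * s) ^ 2) := by
        rw [← mul_pow, hfactor, div_pow, pow_succ, div_div]
    _ = (((p + s) / (1 + p * s)) ^ 2) ^ n / (1 - (p * s) ^ 2) := by
        rw [hdiv, ← pow_mul, two_mul]

theorem compressionMatrix_diag_le (hp₀ : 0 < p) (hp₁ : p < 1) (hs₀ : 0 ≤ s) (hs₁ : s < 1) (n : ℕ) :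
    compressionMatrix p s n n ≤
      (1 - p ^ 2) * s ^ 2 / (1 - (p * s) ^ 2) * (((p + s) / (1 + p * s)) ^ 2) ^ n := by
  have hp₂ : 0 ≤ 1 - p ^ 2 := sub_nonneg.2 (pow_le_one₀ hp₀.le hp₁.le)
  rw [div_mul_eq_mul_div, mul_div_assoc]
  exact mul_le_mul_of_nonneg_left (geomMoment_scaledMeixner_mul_self_le hp₀ hp₁ hs₀ hs₁ n)
    (by positivity)

theorem exists_pos_abs_det_one_sub_corner_compressionMatrix_sub_le
    (hp₀ : 0 < p) (hp₁ : p < 1) (hs₀ : 0 ≤ s) (hs₁ : s < 1) :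
    ∃ C > 0, ∃ M > 0, ∀ n, |(1 - corner (compressionMatrix p s) n).det - C| ≤
      M * (((p + s) / (1 + p * s)) ^ 2) ^ n := by
  have hp : |p| < 1 := by rwa [abs_of_pos hp₀]
  have hs : |s| < 1 := by rwa [abs_of_nonneg hs₀]
  have hratio : (p + s) / (1 + p * s) < 1 := by
    rw [div_lt_one (by positivity)]
    nlinarith [mul_pos (sub_pos.2 hp₁) (sub_pos.2 hs₁)]
  exact exists_pos_abs_det_one_sub_corner_sub_le ((sq_lt_one_iff_abs_lt_one s).2 hs)
    (posSemidef_compressionMatrix hp hs)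
    (posSemidef_sq_smul_one_sub_compressionMatrix hp₀.ne' hp hs) (sq_nonneg _)
    (pow_lt_one₀ (by positivity) hratio two_ne_zero) (compressionMatrix_diag_le hp₀ hp₁ hs₀ hs₁)

end Compression

section Derivatives

open Polynomial

theorem iteratedDeriv_eqOn_of_hasDerivAt {𝕜 F : Type*} [NontriviallyNormedField 𝕜]
    [NormedAddCommGroup F] [NormedSpace 𝕜 F] {U : Set 𝕜} (hU : IsOpen U) {g : 𝕜 → F}
    {f : ℕ → 𝕜 → F} (hg : Set.EqOn g (f 0) U)
    (hf : ∀ k, ∀ x ∈ U, HasDerivAt (f k) (f (k + 1) x) x) (k : ℕ) :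
    Set.EqOn (iteratedDeriv k g) (f k) U := by
  induction k with
  | zero => rwa [iteratedDeriv_zero]
  | succ k ih =>
    intro x hx
    rw [iteratedDeriv_succ, (ih.eventuallyEq_of_mem (hU.mem_nhds hx)).deriv_eq, (hf k x hx).deriv]

/-- The Laplace transform `∑ l, P l * exp (-2 * (l + 1) * u)` of the polynomial `P` sampled at the
even integers `2 * (l + 1)`; it is meaningful for `u > 0`. -/
noncomputable def expSum (P : ℝ[X]) (u : ℝ) : ℝ :=
  exp (-2 * u) * geomMoment (exp (-2 * u)) P

theorem hasSum_expSum (P : ℝ[X]) {u : ℝ} (hu : 0 < u) :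
    HasSum (fun l : ℕ => exp (-2 * (l + 1) * u) * P.eval (l : ℝ)) (expSum P u) := by
  have hz : |exp (-2 * u)| < 1 := by
    rw [abs_of_pos (exp_pos _), exp_lt_one_iff]; linarith
  refine ((hasSum_geomMoment hz P).mul_left (exp (-2 * u))).congr_fun fun l => ?_
  rw [← mul_assoc, ← exp_nat_mul, ← exp_add]
  ring_nf

theorem hasDerivAt_expSum (P : ℝ[X]) {u : ℝ} (hu : 0 < u) :
    HasDerivAt (expSum P) (expSum (C (-2) * (X + 1) * P) u) u := by
  have hderiv (l : ℕ) (v : ℝ) : HasDerivAt (fun v : ℝ => exp (-2 * (l + 1) * v) * P.eval (l : ℝ))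
      (exp (-2 * (l + 1) * v) * (C (-2) * (X + 1) * P).eval (l : ℝ)) v := by
    refine ((hasDerivAt_const_mul (-2 * ((l : ℝ) + 1))).exp.mul_const _).congr_deriv ?_
    simp only [eval_mul, eval_C, eval_add, eval_X, eval_one]
    ring
  have hbound (l : ℕ) (v : ℝ) (hv : v ∈ Set.Ioi (u / 2)) :
      ‖exp (-2 * (l + 1) * v) * (C (-2) * (X + 1) * P).eval (l : ℝ)‖ ≤
        |exp (-2 * (l + 1) * (u / 2)) * (C (-2) * (X + 1) * P).eval (l : ℝ)| := by
    rw [norm_eq_abs, abs_mul, abs_mul, abs_of_pos (exp_pos _), abs_of_pos (exp_pos _)]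
    have hexp : 0 ≤ ((l : ℝ) + 1) * (v - u / 2) := mul_nonneg (by positivity) (sub_pos.2 hv).le
    exact mul_le_mul_of_nonneg_right (exp_le_exp.2 (by linarith)) (abs_nonneg _)
  have hmem : u ∈ Set.Ioi (u / 2) := half_lt_self hu
  have htsum := hasDerivAt_tsum_of_isPreconnected
    (hasSum_expSum (C (-2) * (X + 1) * P) (half_pos hu)).summable.abs isOpen_Ioi isPreconnected_Ioi
    (fun l v _ => hderiv l v) hbound hmem (hasSum_expSum P hu).summable hmem
  rw [(hasSum_expSum _ hu).tsum_eq] at htsum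
  refine htsum.congr_of_eventuallyEq ?_
  filter_upwards [isOpen_Ioi.mem_nhds hu] with v hv
  exact (hasSum_expSum P hv).tsum_eq.symm

theorem two_mul_expSum_one {u : ℝ} (hu : 0 < u) : 2 * expSum 1 u = cosh u / sinh u - 1 := by
  have hz : exp (-2 * u) < 1 := by rw [exp_lt_one_iff]; linarith
  have hw : 1 - exp (-u) ^ 2 ≠ 0 := by
    rw [← exp_nat_mul, Nat.cast_ofNat, mul_neg, ← neg_mul]
    exact (sub_pos.2 hz).ne'
  have hexp : exp (-2 * u) = exp (-u) ^ 2 := by rw [← exp_nat_mul]; ring_nf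
  have hexp' : exp u = (exp (-u))⁻¹ := by rw [exp_neg, inv_inv]
  rw [expSum, geomMoment_one (by rwa [abs_of_pos (exp_pos _)]), cosh_eq, sinh_eq, hexp, hexp']
  field_simp
  ring

theorem phiSV_eq_coth_sub_coth {γ s : ℝ} (hp : sinh (s + γ) ≠ 0) (hm : sinh (s - γ) ≠ 0) :
    phiSV γ s = cosh (s - γ) / sinh (s - γ) - cosh (s + γ) / sinh (s + γ) := by
  have h : sinh (2 * γ) = sinh (s + γ) * cosh (s - γ) - cosh (s + γ) * sinh (s - γ) := by
    rw [← sinh_sub]; ring_nf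
  rw [phiSV, h]
  field_simp

theorem iteratedDeriv_phiSV {t γ : ℝ} (hγ : 0 < γ) (ht : γ < t) (k : ℕ) :
    iteratedDeriv k (phiSV γ) t =
      2 * expSum ((C (-2) * (X + 1)) ^ k) (t - γ) -
        2 * expSum ((C (-2) * (X + 1)) ^ k) (t + γ) := by
  refine iteratedDeriv_eqOn_of_hasDerivAt (U := Set.Ioi γ) isOpen_Ioi (f := fun k s =>
    2 * expSum ((C (-2) * (X + 1)) ^ k) (s - γ) - 2 * expSum ((C (-2) * (X + 1)) ^ k) (s + γ))
    (fun s hs => ?_) (fun k s hs => ?_) k ht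
  · have hm : 0 < s - γ := sub_pos.2 hs
    have hp : 0 < s + γ := by linarith
    rw [phiSV_eq_coth_sub_coth (sinh_pos_iff.2 hp).ne' (sinh_pos_iff.2 hm).ne']
    simp only [pow_zero, two_mul_expSum_one hm, two_mul_expSum_one hp]
    ring
  · have hm : 0 < s - γ := sub_pos.2 hs
    have hp : 0 < s + γ := by linarith [Set.mem_Ioi.1 hs]
    simp only [pow_succ' _ k]
    exact (((hasDerivAt_expSum _ hm).comp_sub_const s γ).const_mul 2).sub
      (((hasDerivAt_expSum _ hp).comp_add_const s γ).const_mul 2)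

end Derivatives

section Ratio

open Polynomial

variable {p s : ℝ}

/-- The functional whose moments along the powers of `-2 * (X + 1)` are the derivatives of `phiSV γ`
at `t`, where `p = exp (γ - t)` and `s = exp (-2 * γ)`. -/
noncomputable def phiMoment (p s : ℝ) : ℝ[X] →ₗ[ℝ] ℝ :=
  (2 * p ^ 2) • (geomMoment (p ^ 2) - s ^ 2 • geomMoment ((p * s) ^ 2))

theorem momentGram_phiMoment_scaledMeixner (hp₀ : p ≠ 0) (hp₁ : |p| < 1) :
    momentGram (phiMoment p s) (scaledMeixner p) =
      (2 * p ^ 2 / (1 - p ^ 2)) • (1 - compressionMatrix p s) := by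
  have hp' : 1 - p ^ 2 ≠ 0 := (sub_pos.2 ((sq_lt_one_iff_abs_lt_one p).2 hp₁)).ne'
  rw [← momentGram_geomMoment_scaledMeixner hp₀ hp₁, compressionMatrix]
  ext j k
  simp only [momentGram, phiMoment, Matrix.sub_apply, Matrix.smul_apply, Matrix.of_apply,
    LinearMap.sub_apply, LinearMap.smul_apply, smul_eq_mul]
  field_simp

theorem det_corner_momentGram_phiMoment_scaledMeixner (hp₀ : p ≠ 0) (hp₁ : |p| < 1) (n : ℕ) :
    (corner (momentGram (phiMoment p s) (scaledMeixner p)) n).det =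
      (2 * p ^ 2 / (1 - p ^ 2)) ^ n * (1 - corner (compressionMatrix p s) n).det := by
  have hsub := submatrix_smul_one_sub (Fin.val_injective (n := n)) 1 (compressionMatrix p s)
  simp only [one_smul] at hsub
  rw [momentGram_phiMoment_scaledMeixner hp₀ hp₁, corner, Matrix.submatrix_smul, Pi.smul_apply,
    Pi.smul_apply, hsub, Matrix.det_smul, Fintype.card_fin, corner]

theorem natDegree_C_mul_X_add_one_pow_le {R : Type*} [CommSemiring R] (a : R) (j : ℕ) :
    ((C a * (X + 1)) ^ j).natDegree ≤ j := by
  compute_degree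

theorem coeff_C_mul_X_add_one_pow_self {R : Type*} [CommSemiring R] (a : R) (j : ℕ) :
    ((C a * (X + 1)) ^ j).coeff j = a ^ j := by
  rw [mul_pow, ← C_pow, coeff_C_mul, coeff_X_add_one_pow, Nat.choose_self, Nat.cast_one, mul_one]

theorem prod_range_pow_sq_mul_pow {M : Type*} [CommMonoid M] (a : M) (n : ℕ) :
    (∏ i ∈ range n, a ^ i) ^ 2 * a ^ n = a ^ (n ^ 2) := by
  rw [prod_pow_eq_pow_sum, ← pow_mul, sum_range_id_mul_two, ← pow_add, Nat.mul_sub_one,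
    Nat.sub_add_cancel n.le_mul_self, sq]

theorem det_corner_momentGram_phiMoment (hp₀ : p ≠ 0) (hp₁ : |p| < 1) (n : ℕ) :
    ((p⁻¹ - p) / 2) ^ (n ^ 2) *
        (corner (momentGram (phiMoment p s) fun j => (C (-2) * (X + 1)) ^ j) n).det /
        (∏ j ∈ range n, (j.factorial : ℝ)) ^ 2 =
      p ^ n * (1 - corner (compressionMatrix p s) n).det := by
  have hp' : 1 - p ^ 2 ≠ 0 := (sub_pos.2 ((sq_lt_one_iff_abs_lt_one p).2 hp₁)).ne'
  have hpow : p ^ n = ((p⁻¹ - p) / 2) ^ n * (2 * p ^ 2 / (1 - p ^ 2)) ^ n := by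
    rw [← mul_pow]; congr 1; field_simp
  have hcoeff (i : ℕ) : (p - p⁻¹) ^ i = (-2) ^ i * ((p⁻¹ - p) / 2) ^ i := by
    rw [← mul_pow]; ring
  have hmeixner := det_corner_momentGram (phiMoment p s) (natDegree_scaledMeixner_le p) n
  simp only [det_corner_momentGram_phiMoment_scaledMeixner hp₀ hp₁, coeff_scaledMeixner_self hp₀,
    hcoeff, prod_div_distrib, prod_mul_distrib] at hmeixner
  rw [det_corner_momentGram (phiMoment p s) (natDegree_C_mul_X_add_one_pow_le (-2)) n]
  simp only [coeff_C_mul_X_add_one_pow_self]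
  rw [hpow, mul_assoc (_ ^ n), hmeixner, ← prod_range_pow_sq_mul_pow]
  ring

variable {t γ : ℝ}

theorem phiMoment_exp (P : ℝ[X]) :
    phiMoment (exp (γ - t)) (exp (-2 * γ)) P = 2 * expSum P (t - γ) - 2 * expSum P (t + γ) := by
  have hm : exp (-2 * (t - γ)) = exp (γ - t) ^ 2 := by rw [← exp_nat_mul]; ring_nf
  have hp : exp (-2 * (t + γ)) = (exp (γ - t) * exp (-2 * γ)) ^ 2 := by
    rw [← exp_add, ← exp_nat_mul]; ring_nf
  simp only [phiMoment, expSum, hm, hp, LinearMap.smul_apply, LinearMap.sub_apply, smul_eq_mul]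
  ring

theorem tauSV_eq_det_corner_momentGram (hγ : 0 < γ) (ht : γ < t) (n : ℕ) :
    tauSV n t γ = (corner (momentGram (phiMoment (exp (γ - t)) (exp (-2 * γ)))
      fun j => (C (-2) * (X + 1)) ^ j) n).det := by
  refine congrArg Matrix.det (Matrix.ext fun j k => ?_)
  rw [Matrix.of_apply, iteratedDeriv_phiSV hγ ht, ← phiMoment_exp, pow_add]
  rfl

theorem ZSV_div_eq_det_one_sub_corner (hγ : 0 < γ) (ht : γ < t) (n : ℕ) :
    ZSV n t γ / (sinh (t + γ) ^ (n ^ 2) * exp (γ - t) ^ n) =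
      (1 - corner (compressionMatrix (exp (γ - t)) (exp (-2 * γ))) n).det := by
  have hsinh : sinh (t + γ) ≠ 0 := (sinh_pos_iff.2 (by linarith)).ne'
  have hp : |exp (γ - t)| < 1 := by rw [abs_of_pos (exp_pos _), exp_lt_one_iff]; linarith
  have hS : sinh (t - γ) = ((exp (γ - t))⁻¹ - exp (γ - t)) / 2 := by
    rw [sinh_eq, ← exp_neg, neg_sub, neg_sub]
  have hdet := det_corner_momentGram_phiMoment (s := exp (-2 * γ)) (exp_ne_zero _) hp n
  rw [← hS, ← tauSV_eq_det_corner_momentGram hγ ht] at hdet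
  rw [ZSV, mul_pow, div_eq_iff (by positivity)]
  linear_combination sinh (t + γ) ^ n ^ 2 * hdet

end Ratio

theorem exp_add_exp_div_one_add_exp_mul_exp (a b : ℝ) :
    (exp a + exp b) / (1 + exp a * exp b) = cosh ((a - b) / 2) / cosh ((a + b) / 2) := by
  obtain ⟨x, rfl⟩ : ∃ x, a = 2 * x := ⟨a / 2, by ring⟩
  obtain ⟨y, rfl⟩ : ∃ y, b = 2 * y := ⟨b / 2, by ring⟩
  have hsub : (2 * x - 2 * y) / 2 = x - y := by ring
  have hadd : (2 * x + 2 * y) / 2 = x + y := by ring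
  rw [hsub, hadd, cosh_eq, cosh_eq, neg_add, neg_sub, exp_sub, exp_sub, exp_add, exp_add, exp_neg,
    exp_neg, two_mul, two_mul, exp_add, exp_add]
  field_simp
  ring

theorem sq_cosh_div_cosh_lt_one {a b : ℝ} (h : |a| < |b|) : (cosh a / cosh b) ^ 2 < 1 :=
  pow_lt_one₀ (by positivity) ((div_lt_one (cosh_pos b)).2 (cosh_lt_cosh.2 h)) two_ne_zero

theorem partition_function_ratio_constant_general (t γ : ℝ) (hγ : 0 < γ) (ht : γ < t) :
    ∃ C > 0, ∃ M > 0, ∀ n : ℕ,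
      |ZSV n t γ / (sinh (t + γ) ^ (n ^ 2) * exp (γ - t) ^ n) - C| ≤
        M * ((cosh ((t - 3 * γ) / 2) / cosh ((t + γ) / 2)) ^ 2) ^ n := by
  have hp : exp (γ - t) < 1 := exp_lt_one_iff.2 (by linarith)
  have hs : exp (-2 * γ) < 1 := exp_lt_one_iff.2 (by linarith)
  have hrate : (exp (γ - t) + exp (-2 * γ)) / (1 + exp (γ - t) * exp (-2 * γ)) =
      cosh ((t - 3 * γ) / 2) / cosh ((t + γ) / 2) := by
    rw [exp_add_exp_div_one_add_exp_mul_exp, ← cosh_neg, ← cosh_neg ((_ + _) / 2)]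
    ring_nf
  simpa only [ZSV_div_eq_det_one_sub_corner hγ ht, hrate] using
    exists_pos_abs_det_one_sub_corner_compressionMatrix_sub_le (exp_pos _) hp (exp_pos _).le hs

/-- For fixed `t > γ > 0` there is a constant `C > 0` such that for each `ε ∈ (0,1)` there is
`M > 0` with `|Z_n/(F^{n²} G^n) - C| ≤ M e^{-n^{1-ε}}` for all `n ≥ 1`, where
`F = sinh(t+γ)`, `G = e^{γ-t}`. -/
theorem partition_function_ratio_constant
    (t γ : ℝ) (hγ : 0 < γ) (ht : γ < t) :
    ∃ C : ℝ, 0 < C ∧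
      ∀ ε : ℝ, 0 < ε → ε < 1 →
        ∃ M : ℝ, 0 < M ∧
          ∀ n : ℕ, 1 ≤ n →
            |ZSV n t γ / (Real.sinh (t + γ) ^ (n ^ 2) * Real.exp (γ - t) ^ n) - C| ≤
              M * Real.exp (-(n : ℝ) ^ (1 - ε)) := by
  obtain ⟨C, hC, M, hM, hrate⟩ := partition_function_ratio_constant_general t γ hγ ht
  have hargs : |(t - 3 * γ) / 2| < |(t + γ) / 2| :=
    sq_lt_sq.1 (by nlinarith [mul_pos hγ (sub_pos.2 ht)])
  refine ⟨C, hC, fun ε hε _ => ?_⟩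
  obtain ⟨K, hK, hpow⟩ := exists_pow_le_mul_exp_neg_rpow (by positivity)
    (sq_cosh_div_cosh_lt_one hargs) (sub_lt_self 1 hε)
  refine ⟨M * K, by positivity, fun n _ => (hrate n).trans ?_⟩
  rw [mul_assoc]
  exact mul_le_mul_of_nonneg_left (hpow n) hM.le
end

section
/- Fix t > γ > 0 and let φ(s) = sinh(2γ)/(sinh(s+γ) sinh(s−γ)). Then for every m ≥ 0 the m-th derivative satisfies φ^{(m)}(t) = 4 ∑_{l=1}^∞ (−2l)^m e^{−2tl} sinh(2γl), and for every n ≥ 1 the Hankel determinant satisfies det( φ^{(j+k−2)}(t) )_{1≤j,k≤n} = (2^{n²}/n!) ∑_{l₁,…,l_n = 1}^∞ (∏_{1≤i<j≤n} (l_j − l_i)²) ∏_{i=1}^n (2 e^{−2t l_i} sinh(2γ l_i)). -/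
open Real Finset

/-!
Expanding `φ(s) = coth (s - γ) - coth (s + γ)` into geometric series shows that `φ` is the moment
generating function, on `s > γ`, of the discrete measure with mass `4 sinh (2γl)` at `-2l`, `l ≥ 1`.
Differentiating under the integral gives the derivatives of `φ` as moments of the tilted measure.
Their Hankel determinant is then a multiple integral of a squared Vandermonde determinant by
Andréief's identity, where the integral of each of the `n!²` products of permutation terms factors
over the coordinates by Fubini. In the Vandermonde determinant at the points `-2l_i`, the factor
`-2` accounts for `2^(n(n-1))` and the masses account for the remaining `2^n`.
-/

open MeasureTheory ProbabilityTheory Matrix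
open scoped Nat

section Andreief

variable {ι α 𝕜 : Type*} [Fintype ι] [DecidableEq ι]

lemma sum_perm_sign_mul_sign_mul_prod {R : Type*} [CommRing R] (M : Matrix ι ι R) :
    ∑ τ : Equiv.Perm ι, ∑ σ : Equiv.Perm ι,
      ((τ.sign : ℤ) : R) * ((σ.sign : ℤ) : R) * ∏ i, M (τ i) (σ i) =
        (Fintype.card ι)! * M.det := by
  have inner_sum (τ : Equiv.Perm ι) : ∑ σ : Equiv.Perm ι,
      ((τ.sign : ℤ) : R) * ((σ.sign : ℤ) : R) * ∏ i, M (τ i) (σ i) = M.det := by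
    calc
      _ = ((τ.sign : ℤ) : R) * (M.submatrix τ id).det := by
        rw [← det_transpose (M.submatrix τ id), det_apply', mul_sum]
        simp only [transpose_apply, submatrix_apply, id_eq, mul_assoc]
      _ = M.det := by
        rw [det_permute, ← mul_assoc, ← Int.cast_mul, Int.units_coe_mul_self, Int.cast_one,
          one_mul]
  simp only [inner_sum, sum_const, card_univ, Fintype.card_perm, nsmul_eq_mul]

lemma det_mul_det_eq_sum_perm {R : Type*} [CommRing R] (f g : ι → α → R) (x : ι → α) :
    det (of fun i j => f j (x i)) * det (of fun i j => g j (x i)) =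
      ∑ τ : Equiv.Perm ι, ∑ σ : Equiv.Perm ι,
        ((τ.sign : ℤ) : R) * ((σ.sign : ℤ) : R) * ∏ i, f (τ i) (x i) * g (σ i) (x i) := by
  rw [← det_transpose, ← det_transpose (of fun i j => g j (x i))]
  simp only [det_apply', transpose_apply, of_apply, sum_mul_sum, prod_mul_distrib,
    mul_mul_mul_comm]

variable [RCLike 𝕜] [MeasurableSpace α] {μ : Measure α} [SigmaFinite μ] {f g : ι → α → 𝕜}

lemma integrable_sign_mul_sign_mul_prod (hfg : ∀ i j, Integrable (fun a => f i a * g j a) μ)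
    (τ σ : Equiv.Perm ι) :
    Integrable (fun x : ι → α => ((τ.sign : ℤ) : 𝕜) * ((σ.sign : ℤ) : 𝕜) *
      ∏ i, f (τ i) (x i) * g (σ i) (x i)) (Measure.pi fun _ => μ) :=
  (Integrable.fintype_prod fun i => hfg (τ i) (σ i)).const_mul _

lemma integrable_det_mul_det (hfg : ∀ i j, Integrable (fun a => f i a * g j a) μ) :
    Integrable (fun x : ι → α => det (of fun i j => f j (x i)) * det (of fun i j => g j (x i)))
      (Measure.pi fun _ => μ) := by
  simp only [det_mul_det_eq_sum_perm]
  exact integrable_finsetSum _ fun τ _ => integrable_finsetSum _ fun σ _ =>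
    integrable_sign_mul_sign_mul_prod hfg τ σ

/-- **Andréief's identity** -/
theorem integral_det_mul_det (hfg : ∀ i j, Integrable (fun a => f i a * g j a) μ) :
    ∫ x : ι → α, det (of fun i j => f j (x i)) * det (of fun i j => g j (x i))
        ∂(Measure.pi fun _ => μ) =
      (Fintype.card ι)! * det (of fun i j => ∫ a, f i a * g j a ∂μ) := by
  have integrable_term := integrable_sign_mul_sign_mul_prod hfg
  simp only [det_mul_det_eq_sum_perm, ← sum_perm_sign_mul_sign_mul_prod, of_apply]
  rw [integral_finsetSum _ fun τ _ => integrable_finsetSum _ fun σ _ => integrable_term τ σ]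
  refine sum_congr rfl fun τ _ => ?_
  rw [integral_finsetSum _ fun σ _ => integrable_term τ σ]
  refine sum_congr rfl fun σ _ => ?_
  rw [integral_const_mul, integral_fintype_prod_eq_prod fun i a => f (τ i) a * g (σ i) a]

end Andreief

section Vandermonde

variable {R : Type*} [CommRing R] {n : ℕ}

lemma det_vandermonde_sq (v : Fin n → R) :
    (vandermonde v).det ^ 2 = ∏ i, ∏ j with i < j, (v j - v i) ^ 2 := by
  simp only [det_vandermonde, prod_pow, filter_lt_eq_Ioi]

lemma det_vandermonde_const_mul_sq (c : R) (v : Fin n → R) :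
    (vandermonde fun i => c * v i).det ^ 2 = c ^ (n * (n - 1)) * (vandermonde v).det ^ 2 := by
  have det_scale : (vandermonde fun i => c * v i).det =
      (∏ i : Fin n, c ^ (i : ℕ)) * (vandermonde v).det := by
    rw [← det_mul_row]
    congr 1
    ext i j
    simp only [vandermonde_apply, of_apply, mul_pow]
  rw [det_scale, mul_pow, Fin.prod_univ_eq_prod_range (c ^ ·), prod_pow_eq_pow_sum, ← pow_mul,
    sum_range_id_mul_two]

lemma det_vandermonde_sq_mul_prod (v w : Fin n → R) :
    (vandermonde v).det ^ 2 * ∏ i, w i =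
      det (of fun i j : Fin n => v i ^ (j : ℕ)) *
        det (of fun i j : Fin n => v i ^ (j : ℕ) * w i) := by
  have det_weight : det (of fun i j : Fin n => v i ^ (j : ℕ) * w i) =
      (∏ i, w i) * (vandermonde v).det := by
    rw [← det_mul_column]
    simp only [vandermonde_apply, mul_comm]
  rw [det_weight, sq, mul_assoc, mul_comm (∏ i, w i)]
  rfl

end Vandermonde

section Moments

variable {α 𝕜 : Type*} [RCLike 𝕜] [MeasurableSpace α] {μ : Measure α} [SigmaFinite μ]
  {X w : α → 𝕜}

lemma integrable_det_vandermonde_sq_mul_prod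
    (h : ∀ m : ℕ, Integrable (fun a => X a ^ m * w a) μ) (n : ℕ) :
    Integrable (fun x : Fin n → α => (vandermonde fun i => X (x i)).det ^ 2 * ∏ i, w (x i))
      (Measure.pi fun _ => μ) := by
  simp only [det_vandermonde_sq_mul_prod]
  refine integrable_det_mul_det (f := fun (j : Fin n) a => X a ^ (j : ℕ))
    (g := fun (j : Fin n) a => X a ^ (j : ℕ) * w a) fun i j => ?_
  simpa only [← mul_assoc, ← pow_add] using h (i + j)

/-- **Heine's formula** for Hankel determinants of moments -/
theorem integral_det_vandermonde_sq_mul_prod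
    (h : ∀ m : ℕ, Integrable (fun a => X a ^ m * w a) μ) (n : ℕ) :
    ∫ x : Fin n → α, (vandermonde fun i => X (x i)).det ^ 2 * ∏ i, w (x i)
        ∂(Measure.pi fun _ => μ) =
      n ! * det (of fun i j : Fin n => ∫ a, X a ^ (i + j : ℕ) * w a ∂μ) := by
  simp only [det_vandermonde_sq_mul_prod]
  rw [integral_det_mul_det (f := fun (j : Fin n) a => X a ^ (j : ℕ))
    (g := fun (j : Fin n) a => X a ^ (j : ℕ) * w a), Fintype.card_fin]
  · simp only [← mul_assoc, ← pow_add]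
  · intro i j
    simpa only [← mul_assoc, ← pow_add] using h (i + j)

end Moments

section CountableSpace

variable {α E : Type*} [Countable α] [MeasurableSpace α] [MeasurableSingletonClass α]
  {μ : Measure α} [NormedAddCommGroup E]

lemma integrable_countable_iff_summable {f : α → E} (hμ : ∀ a, μ {a} ≠ ⊤) :
    Integrable f μ ↔ Summable fun a => μ.real {a} * ‖f a‖ := by
  conv_lhs => rw [← Measure.sum_smul_dirac μ]
  exact integrable_sum_dirac_iff hμ

lemma integral_pi_countable [SigmaFinite μ] {ι : Type*} [Fintype ι] [NormedSpace ℝ E]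
    [CompleteSpace E] {f : (ι → α) → E} (hf : Integrable f (Measure.pi fun _ => μ)) :
    ∫ x, f x ∂(Measure.pi fun _ => μ) = ∑' x : ι → α, (∏ i, μ.real {x i}) • f x := by
  simp only [integral_countable hf, measureReal_def, Measure.pi_singleton, ENNReal.toReal_prod]

end CountableSpace

section MomentGeneratingFunction

variable {Ω : Type*} [MeasurableSpace Ω] {μ : Measure Ω} [SigmaFinite μ] {X : Ω → ℝ} {t : ℝ}

theorem factorial_mul_det_iteratedDeriv_mgf (ht : t ∈ interior (integrableExpSet X μ)) (n : ℕ) :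
    n ! * det (of fun j k : Fin n => iteratedDeriv (j + k : ℕ) (mgf X μ) t) =
      ∫ x : Fin n → Ω, (vandermonde fun i => X (x i)).det ^ 2 * ∏ i, exp (t * X (x i))
        ∂(Measure.pi fun _ => μ) := by
  simp only [iteratedDeriv_mgf ht]
  exact (integral_det_vandermonde_sq_mul_prod
    (integrable_pow_mul_exp_of_mem_interior_integrableExpSet ht) n).symm

theorem factorial_mul_det_iteratedDeriv_mgf_eq_tsum [Countable Ω] [MeasurableSingletonClass Ω]
    (ht : t ∈ interior (integrableExpSet X μ)) (n : ℕ) :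
    n ! * det (of fun j k : Fin n => iteratedDeriv (j + k : ℕ) (mgf X μ) t) =
      ∑' x : Fin n → Ω, (vandermonde fun i => X (x i)).det ^ 2 *
        ∏ i, μ.real {x i} * exp (t * X (x i)) := by
  rw [factorial_mul_det_iteratedDeriv_mgf ht, integral_pi_countable
    (integrable_det_vandermonde_sq_mul_prod
      (integrable_pow_mul_exp_of_mem_interior_integrableExpSet ht) n)]
  simp only [smul_eq_mul, prod_mul_distrib, mul_left_comm]

end MomentGeneratingFunction

lemma sinh_sub_eq_exp_neg_mul_sinh_sub (a b : ℝ) :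
    sinh (a - b) = exp (-b) * sinh a - exp (-a) * sinh b := by
  rw [sinh_sub, ← cosh_sub_sinh, ← cosh_sub_sinh]
  ring

lemma hasSum_exp_neg_two_mul {u : ℝ} (hu : 0 < u) :
    HasSum (fun l : ℕ => exp (-2 * u * (l + 1))) (exp (-u) / (2 * sinh u)) := by
  have exp_lt_one : exp (-2 * u) < 1 := exp_lt_one_iff.2 (by linarith)
  have value : exp (-u) / (2 * sinh u) = exp (-2 * u) * (1 - exp (-2 * u))⁻¹ := by
    have exp_split : exp (-2 * u) = exp (-u) * exp (-u) := by rw [← exp_add]; ring_nf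
    have exp_mul_exp_neg : exp u * exp (-u) = 1 := by rw [← exp_add, add_neg_cancel, exp_zero]
    have two_mul_sinh : 2 * sinh u = exp u - exp (-u) := by rw [sinh_eq]; ring
    rw [← div_eq_mul_inv, div_eq_div_iff (by simp [hu.ne']) (by linarith), two_mul_sinh, exp_split]
    linear_combination -exp (-u) * exp_mul_exp_neg
  rw [value]
  convert! (hasSum_geometric_of_lt_one (exp_pos _).le exp_lt_one).mul_left (exp (-2 * u))
    using 2 with l
  rw [← exp_nat_mul, ← exp_add]
  ring_nf

lemma phiSV_eq_sub {γ s : ℝ} (hs : |γ| < s) :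
    phiSV γ s =
      2 * (exp (-(s - γ)) / (2 * sinh (s - γ)) - exp (-(s + γ)) / (2 * sinh (s + γ))) := by
  obtain ⟨neg_lt, lt⟩ := abs_lt.1 hs
  have sinh_sub_ne : sinh (s - γ) ≠ 0 := (sinh_pos_iff.2 (by linarith)).ne'
  have sinh_add_ne : sinh (s + γ) ≠ 0 := (sinh_pos_iff.2 (by linarith)).ne'
  rw [phiSV, show 2 * γ = s + γ - (s - γ) by ring, sinh_sub_eq_exp_neg_mul_sinh_sub]
  field_simp

lemma hasSum_phiSV {γ s : ℝ} (hs : |γ| < s) :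
    HasSum (fun l : ℕ => 4 * sinh (2 * γ * (l + 1)) * exp (-2 * s * (l + 1))) (phiSV γ s) := by
  obtain ⟨neg_lt, lt⟩ := abs_lt.1 hs
  rw [phiSV_eq_sub hs]
  convert! ((hasSum_exp_neg_two_mul (u := s - γ) (by linarith)).sub
    (hasSum_exp_neg_two_mul (u := s + γ) (by linarith))).mul_left 2 using 2 with l
  have exp_sub_γ : exp (-2 * (s - γ) * (l + 1)) =
      exp (2 * γ * (l + 1)) * exp (-2 * s * (l + 1)) := by rw [← exp_add]; ring_nf
  have exp_add_γ : exp (-2 * (s + γ) * (l + 1)) =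
      exp (-(2 * γ * (l + 1))) * exp (-2 * s * (l + 1)) := by rw [← exp_add]; ring_nf
  rw [exp_sub_γ, exp_add_γ, sinh_eq]
  ring

/-- The discrete measure having `phiSV γ` as moment generating function on `(γ, ∞)`, for `0 ≤ γ`.
It lives on indices: the index `l - 1`, of mass `4 sinh (2γl)`, stands for the point `-2l` of the
real line that `phiNode` returns. `ENNReal.ofReal` makes it the zero measure for `γ < 0`. -/
noncomputable def phiMeasure (γ : ℝ) : Measure ℕ :=
  Measure.count.withDensity fun l => ENNReal.ofReal (4 * sinh (2 * γ * (l + 1)))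

/-- The random variable on the space of `phiMeasure` whose moment generating function is `phiSV γ`;
the index `l` corresponds to the summation variable `l + 1` of the paper. -/
def phiNode (l : ℕ) : ℝ := -2 * (l + 1)

section PhiMeasure

variable {γ s : ℝ}

instance : SigmaFinite (phiMeasure γ) :=
  SigmaFinite.withDensity_ofReal _

lemma phiMeasure_singleton (l : ℕ) :
    phiMeasure γ {l} = ENNReal.ofReal (4 * sinh (2 * γ * (l + 1))) := by
  rw [phiMeasure, withDensity_apply _ (measurableSet_singleton l), lintegral_singleton,
    Measure.count_singleton, mul_one]

lemma phiMeasure_real_singleton (hγ : 0 ≤ γ) (l : ℕ) :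
    (phiMeasure γ).real {l} = 4 * sinh (2 * γ * (l + 1)) := by
  rw [measureReal_def, phiMeasure_singleton, ENNReal.toReal_ofReal]
  exact mul_nonneg (by norm_num) (sinh_nonneg_iff.2 (by positivity))

lemma exp_mul_phiNode (s : ℝ) (l : ℕ) : exp (s * phiNode l) = exp (-2 * s * (l + 1)) := by
  rw [phiNode]
  ring_nf

lemma hasSum_phiMeasure_real_mul_exp (hγ : 0 ≤ γ) (hs : γ < s) :
    HasSum (fun l => (phiMeasure γ).real {l} * exp (s * phiNode l)) (phiSV γ s) := by
  simpa only [phiMeasure_real_singleton hγ, exp_mul_phiNode] using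
    hasSum_phiSV (by rwa [abs_of_nonneg hγ])

lemma Ioi_subset_integrableExpSet_phiNode (hγ : 0 ≤ γ) :
    Set.Ioi γ ⊆ integrableExpSet phiNode (phiMeasure γ) := by
  intro r hr
  refine (integrable_countable_iff_summable fun l => ?_).2 ?_
  · simp only [phiMeasure_singleton, ne_eq, ENNReal.ofReal_ne_top, not_false_eq_true]
  · simpa only [norm_eq_abs, abs_exp] using (hasSum_phiMeasure_real_mul_exp hγ hr).summable

lemma mem_interior_integrableExpSet_phiNode (hγ : 0 ≤ γ) (hs : γ < s) :
    s ∈ interior (integrableExpSet phiNode (phiMeasure γ)) :=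
  interior_maximal (Ioi_subset_integrableExpSet_phiNode hγ) isOpen_Ioi hs

lemma mgf_phiNode (hγ : 0 ≤ γ) (hs : γ < s) : mgf phiNode (phiMeasure γ) s = phiSV γ s := by
  rw [mgf, integral_countable (Ioi_subset_integrableExpSet_phiNode hγ hs)]
  exact (hasSum_phiMeasure_real_mul_exp hγ hs).tsum_eq

lemma iteratedDeriv_phiSV_eq_iteratedDeriv_mgf (hγ : 0 ≤ γ) (hs : γ < s) (m : ℕ) :
    iteratedDeriv m (phiSV γ) s = iteratedDeriv m (mgf phiNode (phiMeasure γ)) s := by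
  refine Filter.EventuallyEq.iteratedDeriv_eq m ?_
  filter_upwards [Ioi_mem_nhds hs] with r hr using (mgf_phiNode hγ hr).symm

lemma iteratedDeriv_phiSV_s10 (hγ : 0 ≤ γ) (hs : γ < s) (m : ℕ) :
    iteratedDeriv m (phiSV γ) s =
      4 * ∑' l : ℕ, (-2 * ((l : ℝ) + 1)) ^ m * exp (-2 * s * (l + 1)) *
        sinh (2 * γ * (l + 1)) := by
  have hs_mem := mem_interior_integrableExpSet_phiNode hγ hs
  rw [iteratedDeriv_phiSV_eq_iteratedDeriv_mgf hγ hs, iteratedDeriv_mgf hs_mem,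
    integral_countable (integrable_pow_mul_exp_of_mem_interior_integrableExpSet hs_mem m),
    ← tsum_mul_left]
  refine tsum_congr fun l => ?_
  rw [phiMeasure_real_singleton hγ, exp_mul_phiNode, phiNode, smul_eq_mul]
  ring

lemma det_vandermonde_phiNode_sq {n : ℕ} (l : Fin n → ℕ) :
    (vandermonde fun i => phiNode (l i)).det ^ 2 =
      2 ^ (n * (n - 1)) * ∏ i, ∏ j with i < j, (((l j : ℝ) + 1) - ((l i : ℝ) + 1)) ^ 2 := by
  have scaled := det_vandermonde_const_mul_sq (-2) fun i => (l i : ℝ) + 1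
  rwa [(Nat.even_mul_pred_self n).neg_pow, det_vandermonde_sq fun i => (l i : ℝ) + 1] at scaled

lemma prod_phiMeasure_real_mul_exp (hγ : 0 ≤ γ) {n : ℕ} (l : Fin n → ℕ) :
    ∏ i, (phiMeasure γ).real {l i} * exp (s * phiNode (l i)) =
      2 ^ n * ∏ i, 2 * exp (-2 * s * (l i + 1)) * sinh (2 * γ * (l i + 1)) := by
  rw [← Fin.prod_const, ← prod_mul_distrib]
  refine prod_congr rfl fun i _ => ?_
  rw [phiMeasure_real_singleton hγ, exp_mul_phiNode]
  ring

end PhiMeasure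

/-- **Derivatives of `φ` and the Hankel determinant as a multiple sum.**
For `t > γ > 0`: `φ^{(m)}(t) = 4 ∑_{l≥1} (-2l)^m e^{-2tl} sinh(2γl)` for every `m`, and
`det(φ^{(j+k-2)}(t))_{1≤j,k≤n} = (2^{n²}/n!) ∑_{l₁,…,l_n ≥ 1} ∏_{i<j}(l_j-l_i)²
∏_i 2 e^{-2t l_i} sinh(2γ l_i)` for every `n ≥ 1`. -/
theorem phi_derivatives_and_hankel_determinant
    (t γ : ℝ) (hγ : 0 < γ) (ht : γ < t) :
    (∀ m : ℕ,
      iteratedDeriv m (phiSV γ) t =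
        4 * ∑' l : ℕ, (-2 * ((l : ℝ) + 1)) ^ m *
          Real.exp (-2 * t * ((l : ℝ) + 1)) * Real.sinh (2 * γ * ((l : ℝ) + 1))) ∧
    (∀ n : ℕ, 1 ≤ n →
      Matrix.det (Matrix.of fun j k : Fin n =>
          iteratedDeriv ((j : ℕ) + (k : ℕ)) (phiSV γ) t) =
        ((2 : ℝ) ^ (n ^ 2) / (n.factorial : ℝ)) *
          ∑' l : Fin n → ℕ,
            (∏ i : Fin n, ∏ j ∈ Finset.univ.filter (fun j : Fin n => i < j),
                (((l j : ℝ) + 1) - ((l i : ℝ) + 1)) ^ 2) *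
              ∏ i : Fin n,
                2 * Real.exp (-2 * t * ((l i : ℝ) + 1)) *
                  Real.sinh (2 * γ * ((l i : ℝ) + 1))) := by
  refine ⟨iteratedDeriv_phiSV_s10 hγ.le ht, fun n _ => ?_⟩
  have hankel_eq_tsum := factorial_mul_det_iteratedDeriv_mgf_eq_tsum
    (mem_interior_integrableExpSet_phiNode hγ.le ht) n
  simp only [← iteratedDeriv_phiSV_eq_iteratedDeriv_mgf hγ.le ht, det_vandermonde_phiNode_sq,
    prod_phiMeasure_real_mul_exp hγ.le, mul_mul_mul_comm, tsum_mul_left] at hankel_eq_tsum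
  have two_pow_sq : (2 : ℝ) ^ (n * (n - 1)) * 2 ^ n = 2 ^ n ^ 2 := by
    rw [← pow_add, Nat.mul_sub_one, Nat.sub_add_cancel n.le_mul_self, sq]
  rw [div_mul_eq_mul_div, eq_div_iff (by positivity), mul_comm, hankel_eq_tsum, two_pow_sq]
end

section
/- For every fixed t > γ > 0, Z_n > 0 for all n ≥ 1 and the free energy limit holds: lim_{n→∞} (ln Z_n)/n² = ln sinh(t+γ). In particular the free energy of the six-vertex model with DWBC in the ferroelectric phase equals the exponential growth rate ln F of the weight of the ground state configuration, where F = sinh(t+γ). -/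
/-!
The derivative `φ^{(m)}(t)` is the `m`-th moment of a discrete measure with nodes `-2(k+1)` and
weights `4 sinh(2(k+1)γ) e^{-2(k+1)t}`, obtained by expanding `φ` in exponentials. These weights lie
between two constant multiples of the geometric weights `e^{-2(k+1)(t-γ)}`, and the Hankel
determinant of a moment sequence is monotone in the measure. For geometric weights on an arithmetic
progression (the Meixner case) it is explicit: in the Newton basis the Gram matrix consists of the
sums `∑ q^k C(k,i) C(k,j)`, which satisfy a Pascal-type recurrence. The result is
`sinh(t-γ)^{-n²} (∏ j!)²` up to a factor exponential in `n`, so that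
`Z_n = sinh(t+γ)^{n²} e^{O(n)}`.
-/

open Real Filter Finset

section Determinants

section Monotonicity

open scoped ComplexOrder Matrix MatrixOrder

variable {ι 𝕜 : Type*} [Fintype ι] [DecidableEq ι] [RCLike 𝕜]

theorem one_le_det_one_add {M : Matrix ι ι 𝕜} (hM : M.PosSemidef) : 1 ≤ (1 + M).det := by
  have h : (1 + M).det = ((∏ i, (1 + hM.1.eigenvalues i) : ℝ) : 𝕜) := by
    conv_lhs => rw [hM.1.spectral_theorem, Unitary.conjStarAlgAut_apply, Matrix.mul_assoc,
      Matrix.det_one_add_mul_comm, Matrix.mul_assoc, Unitary.coe_star_mul_self, mul_one,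
      ← Matrix.diagonal_one, Matrix.diagonal_add, Matrix.det_diagonal]
    simp
  rw [h, ← RCLike.ofReal_one, RCLike.ofReal_le_ofReal]
  exact Finset.one_le_prod fun i _ => by linarith [hM.eigenvalues_nonneg i]

theorem det_le_det_of_posSemidef_sub {A B : Matrix ι ι 𝕜} (hA : A.PosSemidef)
    (hAB : (B - A).PosSemidef) : A.det ≤ B.det := by
  obtain ⟨L, rfl⟩ := CStarAlgebra.nonneg_iff_eq_star_mul_self.1 hA.nonneg
  rw [Matrix.star_eq_conjTranspose] at *
  -- Congruence by `L⁻¹` turns `A` into `1`.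
  by_cases hL : IsUnit L.det
  · have hB : B = Lᴴ * (1 + (L⁻¹)ᴴ * (B - Lᴴ * L) * L⁻¹) * L := by
      simp only [mul_add, add_mul, mul_one, Matrix.mul_assoc, Matrix.nonsing_inv_mul L hL]
      simp only [← Matrix.mul_assoc, ← Matrix.conjTranspose_mul, Matrix.nonsing_inv_mul L hL]
      simp
    have hdet : B.det = (Lᴴ * L).det * (1 + (L⁻¹)ᴴ * (B - Lᴴ * L) * L⁻¹).det := by
      conv_lhs => rw [hB]
      simp only [Matrix.det_mul]
      ring
    rw [hdet]
    exact le_mul_of_one_le_right hA.det_nonneg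
      (one_le_det_one_add (hAB.conjTranspose_mul_mul_same L⁻¹))
  · have hB : B.PosSemidef := by simpa using hA.add hAB
    have hL0 : L.det = 0 := by simpa using hL
    simpa [Matrix.det_mul, hL0] using hB.det_nonneg

end Monotonicity

theorem det_of_pascal_recurrence {R : Type*} [CommRing R] {α β γ : R} {G : ℕ → ℕ → R}
    (hcol : ∀ i, G (i + 1) 0 = α * G i 0)
    (hrec : ∀ i j, G (i + 1) (j + 1) = α * G i (j + 1) + β * G (i + 1) j + γ * G i j) (n : ℕ) :
    (Matrix.of fun i j : Fin n => G i j).det = G 0 0 ^ n * (α * β + γ) ^ n.choose 2 := by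
  induction n with
  | zero => simp
  | succ n ih =>
    -- Subtracting `α` times the previous row, then `β` times the previous column, leaves
    -- `α * β + γ` times the same matrix of one size less.
    let B : Matrix (Fin (n + 1)) (Fin (n + 1)) R := Matrix.of fun i j =>
      Fin.cases (G 0 j) (fun i' : Fin n => G (i' + 1) j - α * G i' j) i
    let C : Matrix (Fin (n + 1)) (Fin (n + 1)) R := Matrix.of fun i j =>
      Fin.cases (B i 0) (fun j' : Fin n => B i j'.succ - β * B i j'.castSucc) j
    have hB : (Matrix.of fun i j : Fin (n + 1) => G i j).det = B.det :=
      Matrix.det_eq_of_forall_row_eq_smul_add_pred (fun _ => α) (by simp [B]) (by simp [B])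
    have hC : B.det = C.det :=
      Matrix.det_eq_of_forall_col_eq_smul_add_pred (fun _ => β) (by simp [C]) (by simp [C])
    have hC_zero : C 0 0 = G 0 0 := by simp [C, B]
    have hC_col : ∀ i : Fin n, C i.succ 0 = 0 := by simp [C, B, hcol]
    have hC_minor : C.submatrix (Fin.succAbove 0) Fin.succ =
        (α * β + γ) • Matrix.of fun i j : Fin n => G i j := by
      ext i j
      simp only [C, B, hrec, Matrix.submatrix_apply, Fin.zero_succAbove, Matrix.of_apply,
        Fin.cases_succ, Fin.val_succ, Fin.val_castSucc, Matrix.smul_apply, smul_eq_mul]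
      ring
    rw [hB, hC, Matrix.det_succ_column_zero, Fin.sum_univ_succ]
    simp only [hC_zero, hC_col, hC_minor, Matrix.det_smul, Fintype.card_fin, ih,
      Nat.choose_succ_succ' n 1, Nat.choose_one_right, Fin.val_zero, pow_zero, one_mul, mul_zero,
      zero_mul, sum_const_zero, add_zero]
    ring

end Determinants

section Hankel

open scoped Polynomial Matrix

/-- The `n × n` Hankel matrix of a sequence, with rows and columns numbered from `0`. -/
def hankelMatrix {R : Type*} (s : ℕ → R) (n : ℕ) : Matrix (Fin n) (Fin n) R :=
  Matrix.of fun i j => s (i + j)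

section Algebra

variable {R : Type*}

/-- The Riesz functional of a sequence: the linear form on polynomials sending `X ^ m` to `s m`. It
plays the role of integration when `s` is the moment sequence of a measure. -/
noncomputable def rieszFunctional [CommSemiring R] (s : ℕ → R) : R[X] →ₗ[R] R :=
  (Polynomial.basisMonomials R).constr R s

theorem rieszFunctional_monomial [CommSemiring R] (s : ℕ → R) (m : ℕ) (a : R) :
    rieszFunctional s (Polynomial.monomial m a) = a * s m := by
  have h : rieszFunctional s (Polynomial.monomial m 1) = s m :=
    (Polynomial.basisMonomials R).constr_basis R s m
  rw [← mul_one a, ← smul_eq_mul, ← Polynomial.smul_monomial, map_smul, h, smul_eq_mul,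
    smul_eq_mul, mul_one]

theorem rieszFunctional_sub [CommRing R] (s t : ℕ → R) (p : R[X]) :
    rieszFunctional (s - t) p = rieszFunctional s p - rieszFunctional t p := by
  simp [rieszFunctional]

theorem dotProduct_hankelMatrix_mulVec [CommSemiring R] (s : ℕ → R) {n : ℕ}
    (u v : Fin n → R) :
    u ⬝ᵥ hankelMatrix s n *ᵥ v = rieszFunctional s
      ((∑ i : Fin n, Polynomial.monomial i (u i)) * ∑ j : Fin n, Polynomial.monomial j (v j)) := by
  rw [sum_mul_sum]
  simp only [map_sum, Polynomial.monomial_mul_monomial, rieszFunctional_monomial,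
    dotProduct, Matrix.mulVec, hankelMatrix, Matrix.of_apply, mul_sum]
  exact sum_congr rfl fun i _ => sum_congr rfl fun j _ => by ring

theorem det_rieszFunctional_mul [CommRing R] (s : ℕ → R) {n : ℕ} {p : Fin n → R[X]}
    (hdeg : ∀ i, (p i).natDegree = i) (hmonic : ∀ i, (p i).Monic) :
    (Matrix.of fun i j => rieszFunctional s (p i * p j)).det = (hankelMatrix s n).det := by
  let T : Matrix (Fin n) (Fin n) R := Matrix.of fun i j => (p j).coeff i
  have hT : T.det = 1 := Matrix.det_matrixOfPolynomials p hdeg hmonic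
  have hp : ∀ i, p i = ∑ l : Fin n, Polynomial.monomial l ((p i).coeff l) := fun i => by
    rw [← Finset.sum_range fun l => Polynomial.monomial l ((p i).coeff l)]
    exact (p i).as_sum_range' n (by rw [hdeg]; exact i.2)
  have hfactor : (Matrix.of fun i j => rieszFunctional s (p i * p j)) =
      Tᵀ * (hankelMatrix s n * T) := by
    ext i j
    rw [Matrix.of_apply, hp i, hp j, ← dotProduct_hankelMatrix_mulVec]
    rfl
  rw [hfactor, Matrix.det_mul, Matrix.det_mul, Matrix.det_transpose, hT, one_mul, mul_one]

end Algebra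

theorem posSemidef_hankelMatrix {s : ℕ → ℝ} (hs : ∀ p : ℝ[X], 0 ≤ rieszFunctional s (p * p))
    (n : ℕ) : (hankelMatrix s n).PosSemidef := by
  refine .of_dotProduct_mulVec_nonneg (Matrix.ext fun i j => ?_) fun v => ?_
  · simp [hankelMatrix, add_comm]
  · rw [star_trivial, dotProduct_hankelMatrix_mulVec]
    exact hs _

theorem det_hankelMatrix_le_det_hankelMatrix {s t : ℕ → ℝ}
    (hs : ∀ p : ℝ[X], 0 ≤ rieszFunctional s (p * p))
    (hst : ∀ p : ℝ[X], rieszFunctional s (p * p) ≤ rieszFunctional t (p * p)) (n : ℕ) :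
    (hankelMatrix s n).det ≤ (hankelMatrix t n).det := by
  have hsub : hankelMatrix t n - hankelMatrix s n = hankelMatrix (t - s) n := rfl
  refine det_le_det_of_posSemidef_sub (posSemidef_hankelMatrix hs n) ?_
  rw [hsub]
  exact posSemidef_hankelMatrix
    (fun p => by simpa only [rieszFunctional_sub, sub_nonneg] using hst p) n

end Hankel

section Moments

open scoped Polynomial

/-- `s` is the moment sequence of the discrete measure with mass `w k` at the node `x k`; all the
moments are required to converge. -/
def IsMomentSeq {ι : Type*} (x w : ι → ℝ) (s : ℕ → ℝ) : Prop :=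
  ∀ m, HasSum (fun k => w k * x k ^ m) (s m)

namespace IsMomentSeq

variable {ι : Type*} {x u w : ι → ℝ} {s t : ℕ → ℝ}

theorem hasSum_eval (hs : IsMomentSeq x w s) (p : ℝ[X]) :
    HasSum (fun k => w k * p.eval (x k)) (rieszFunctional s p) := by
  induction p using Polynomial.induction_on' with
  | add p q hp hq => simpa only [Polynomial.eval_add, mul_add, map_add] using hp.add hq
  | monomial m a =>
    simpa only [Polynomial.eval_monomial, rieszFunctional_monomial, mul_left_comm] using
      (hs m).mul_left a

theorem det_hankelMatrix_le (hs : IsMomentSeq x u s) (ht : IsMomentSeq x w t) (hu : ∀ k, 0 ≤ u k)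
    (huw : ∀ k, u k ≤ w k) (n : ℕ) : (hankelMatrix s n).det ≤ (hankelMatrix t n).det := by
  refine det_hankelMatrix_le_det_hankelMatrix (fun p => ?_) (fun p => ?_) n
  · refine (hs.hasSum_eval (p * p)).nonneg fun k => ?_
    rw [Polynomial.eval_mul]
    exact mul_nonneg (hu k) (mul_self_nonneg _)
  · refine hasSum_le (fun k => ?_) (hs.hasSum_eval (p * p)) (ht.hasSum_eval (p * p))
    rw [Polynomial.eval_mul]
    exact mul_le_mul_of_nonneg_right (huw k) (mul_self_nonneg _)

end IsMomentSeq

/-- The Gram matrix entry `∑ q ^ k C(k,i) C(k,j)` of the polynomials `C(X,i)` with respect to the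
geometric weights `q ^ k` on `ℕ`. -/
noncomputable def binomialSum (q : ℝ) (i j : ℕ) : ℝ :=
  ∑' k : ℕ, q ^ k * ((k.choose i : ℝ) * k.choose j)

variable {q : ℝ}

theorem summable_pow_mul_choose_mul_choose (hq : |q| < 1) (i j : ℕ) :
    Summable fun k : ℕ => q ^ k * ((k.choose i : ℝ) * k.choose j) := by
  refine .of_norm_bounded
    (summable_norm_pow_mul_geometric_of_norm_lt_one (i + j) (r := q) hq) fun k => ?_
  have hi : (k.choose i : ℝ) ≤ (k : ℝ) ^ i := mod_cast Nat.choose_le_pow k i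
  have hj : (k.choose j : ℝ) ≤ (k : ℝ) ^ j := mod_cast Nat.choose_le_pow k j
  simp only [norm_mul, norm_pow, Real.norm_natCast, pow_add]
  rw [mul_comm]
  gcongr

theorem binomialSum_zero_zero (hq : |q| < 1) : binomialSum q 0 0 = 1 / (1 - q) := by
  simp [binomialSum, tsum_geometric_of_abs_lt_one hq]

theorem binomialSum_succ_zero (hq : |q| < 1) (i : ℕ) :
    binomialSum q (i + 1) 0 = q / (1 - q) * binomialSum q i 0 := by
  have hS := summable_pow_mul_choose_mul_choose hq
  have h : binomialSum q (i + 1) 0 = q * (binomialSum q i 0 + binomialSum q (i + 1) 0) := by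
    conv_lhs => rw [binomialSum, (hS _ _).tsum_eq_zero_add]
    simp only [binomialSum, ← (hS _ _).tsum_add (hS _ _), ← tsum_mul_left]
    simp only [Nat.choose_succ_succ', Nat.choose_zero_succ, Nat.choose_zero_right, Nat.cast_add,
      Nat.cast_zero, Nat.cast_one, zero_mul, mul_zero, zero_add]
    exact tsum_congr fun k => by ring
  have : 1 - q ≠ 0 := by linarith [(abs_lt.1 hq).2]
  field_simp
  linarith

theorem binomialSum_succ_succ (hq : |q| < 1) (i j : ℕ) :
    binomialSum q (i + 1) (j + 1) = q / (1 - q) * binomialSum q i (j + 1) +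
      q / (1 - q) * binomialSum q (i + 1) j + q / (1 - q) * binomialSum q i j := by
  have hS := summable_pow_mul_choose_mul_choose hq
  have h : binomialSum q (i + 1) (j + 1) = q * (binomialSum q i j + binomialSum q i (j + 1) +
      (binomialSum q (i + 1) j + binomialSum q (i + 1) (j + 1))) := by
    conv_lhs => rw [binomialSum, (hS _ _).tsum_eq_zero_add]
    simp only [binomialSum, ← (hS _ _).tsum_add (hS _ _),
      ← ((hS _ _).add (hS _ _)).tsum_add ((hS _ _).add (hS _ _)), ← tsum_mul_left]
    simp only [Nat.choose_succ_succ', Nat.choose_zero_succ, Nat.cast_add, Nat.cast_zero,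
      mul_zero, zero_add]
    exact tsum_congr fun k => by ring
  have : 1 - q ≠ 0 := by linarith [(abs_lt.1 hq).2]
  field_simp
  linarith

theorem eval_nodal_range_of_arithmetic {R : Type*} [CommRing R] {x : ℕ → R} {a b : R}
    (hx : ∀ k, x k = a * k + b) (i k : ℕ) :
    (Lagrange.nodal (range i) x).eval (x k) = a ^ i * i.factorial * k.choose i := by
  have hterm : ∀ l, x k - x l = a * ((k : R) - l) := fun l => by rw [hx, hx]; ring
  simp only [Lagrange.eval_nodal, hterm, prod_mul_distrib, prod_const, card_range,
    prod_range_natCast_sub, ← Nat.descFactorial_eq_prod_range,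
    Nat.descFactorial_eq_factorial_mul_choose, Nat.cast_mul, mul_assoc]

theorem IsMomentSeq.det_hankelMatrix_of_geometric {x s : ℕ → ℝ} {a b c : ℝ} (hq : |q| < 1)
    (hx : ∀ k, x k = a * k + b) (hs : IsMomentSeq x (fun k => c * q ^ k) s) (n : ℕ) :
    (hankelMatrix s n).det = (∏ j ∈ range n, (j.factorial : ℝ)) ^ 2 *
      ((c / (1 - q)) ^ n * (a ^ 2 * q / (1 - q) ^ 2) ^ n.choose 2) := by
  let p : ℕ → ℝ[X] := fun i => Lagrange.nodal (range i) x
  let v : ℕ → ℝ := fun i => a ^ i * i.factorial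
  have hq1 : 1 - q ≠ 0 := by linarith [(abs_lt.1 hq).2]
  have hgram : ∀ i j, rieszFunctional s (p i * p j) = v i * (v j * (c * binomialSum q i j)) := by
    intro i j
    refine (hs.hasSum_eval (p i * p j)).unique ?_
    refine ((((summable_pow_mul_choose_mul_choose hq i j).hasSum.mul_left c).mul_left
      (v j)).mul_left (v i)).congr_fun fun k => ?_
    rw [Polynomial.eval_mul, eval_nodal_range_of_arithmetic hx, eval_nodal_range_of_arithmetic hx]
    ring
  have hpascal : (Matrix.of fun i j : Fin n => c * binomialSum q i j).det =
      (c / (1 - q)) ^ n * (q / (1 - q) ^ 2) ^ n.choose 2 := by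
    rw [det_of_pascal_recurrence (α := q / (1 - q)) (β := q / (1 - q)) (γ := q / (1 - q))
      (G := fun i j => c * binomialSum q i j)
      (fun i => by rw [binomialSum_succ_zero hq]; ring)
      (fun i j => by rw [binomialSum_succ_succ hq]; ring), binomialSum_zero_zero hq]
    congr 2
    · field_simp
    · field_simp
      ring
  have hv : ∏ i : Fin n, v i = a ^ n.choose 2 * ∏ j ∈ range n, (j.factorial : ℝ) := by
    rw [← prod_range v, prod_mul_distrib, prod_pow_eq_pow_sum, sum_range_id, Nat.choose_two_right]
  calc (hankelMatrix s n).det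
      = (Matrix.of fun i j : Fin n => v i * (v j * (c * binomialSum q i j))).det := by
        rw [← det_rieszFunctional_mul s (p := fun i : Fin n => p i)
          (fun i => by simp [p, Lagrange.natDegree_nodal]) fun i => Lagrange.nodal_monic]
        simp only [hgram]
    _ = (∏ i : Fin n, v i) * ((∏ j : Fin n, v j) *
          (Matrix.of fun i j : Fin n => c * binomialSum q i j).det) := by
        rw [← Matrix.det_mul_row, ← Matrix.det_mul_column]
        rfl
    _ = _ := by
        rw [hpascal, hv, mul_div_assoc, mul_pow (a ^ 2), ← pow_mul, mul_comm 2, pow_mul]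
        ring

end Moments

section ExponentialSeries

variable {ι : Type*} {a x : ι → ℝ} {f : ℝ → ℝ} {σ : ℝ}

theorem abs_mul_mul_exp_le {c x s s₀ s₁ : ℝ} (hx : x ≤ 0) (h₁ : s₁ < s₀) (h₀ : s₀ ≤ s) :
    |c * x * exp (x * s)| ≤ |c * exp (x * s₁)| / (s₀ - s₁) := by
  have hδ : 0 < s₀ - s₁ := sub_pos.2 h₁
  have hlin : |x| * (s₀ - s₁) ≤ exp (-x * (s₀ - s₁)) := by
    rw [abs_of_nonpos hx]
    linarith [add_one_le_exp (-x * (s₀ - s₁))]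
  have hexp : exp (-x * (s₀ - s₁)) * exp (x * s) ≤ exp (x * s₁) := by
    rw [← exp_add, exp_le_exp]
    nlinarith
  rw [le_div_iff₀ hδ, abs_mul, abs_mul, abs_mul, abs_exp, abs_exp]
  calc |c| * |x| * exp (x * s) * (s₀ - s₁) = |c| * (|x| * (s₀ - s₁) * exp (x * s)) := by ring
    _ ≤ |c| * (exp (-x * (s₀ - s₁)) * exp (x * s)) := by gcongr
    _ ≤ |c| * exp (x * s₁) := by gcongr

theorem hasSum_deriv_of_hasSum_exp (hx : ∀ k, x k ≤ 0)
    (hf : ∀ s, σ < s → HasSum (fun k => a k * exp (x k * s)) (f s)) {s : ℝ} (hs : σ < s) :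
    HasSum (fun k => a k * x k * exp (x k * s)) (deriv f s) := by
  obtain ⟨s₀, hσ₀, h₀⟩ := exists_between hs
  obtain ⟨s₁, hσ₁, h₁⟩ := exists_between hσ₀
  have hbound : ∀ k, ∀ y ∈ Set.Ioi s₀,
      ‖a k * x k * exp (x k * y)‖ ≤ |a k * exp (x k * s₁)| / (s₀ - s₁) := fun k y hy =>
    abs_mul_mul_exp_le (hx k) h₁ (Set.mem_Ioi.1 hy).le
  have hsummable : Summable fun k => |a k * exp (x k * s₁)| / (s₀ - s₁) :=
    (hf s₁ hσ₁).summable.abs.div_const _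
  have hterm : ∀ k, ∀ y ∈ Set.Ioi s₀,
      HasDerivAt (fun y => a k * exp (x k * y)) (a k * x k * exp (x k * y)) y := fun k y _ => by
    convert! (((hasDerivAt_id y).const_mul (x k)).exp).const_mul (a k) using 1
    simp only [id, mul_one]
    ring
  have hderiv := hasDerivAt_tsum_of_isPreconnected hsummable isOpen_Ioi isPreconnected_Ioi hterm
    hbound h₀ (hf s hs).summable h₀
  have hf_eq : f =ᶠ[nhds s] fun y => ∑' k, a k * exp (x k * y) := by
    filter_upwards [lt_mem_nhds hs] with y hy using (hf y hy).tsum_eq.symm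
  rw [(hderiv.congr_of_eventuallyEq hf_eq).deriv]
  exact (Summable.of_norm_bounded hsummable fun k => hbound k s h₀).hasSum

theorem isMomentSeq_iteratedDeriv_of_hasSum_exp (hx : ∀ k, x k ≤ 0)
    (hf : ∀ s, σ < s → HasSum (fun k => a k * exp (x k * s)) (f s)) {s : ℝ} (hs : σ < s) :
    IsMomentSeq x (fun k => a k * exp (x k * s)) fun m => iteratedDeriv m f s := by
  intro m
  induction m generalizing a f with
  | zero => simpa using hf s hs
  | succ m ih =>
    simp only [iteratedDeriv_succ']
    refine (ih fun y hy => hasSum_deriv_of_hasSum_exp hx hf hy).congr_fun fun k => ?_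
    ring

end ExponentialSeries

section Hyperbolic

theorem sinh_mul_exp_neg (y : ℝ) : sinh y * exp (-y) = (1 - exp (-2 * y)) / 2 := by
  have h : exp y * exp (-y) = 1 := by rw [← exp_add, add_neg_cancel, exp_zero]
  have h2 : exp (-2 * y) = exp (-y) * exp (-y) := by rw [← exp_add]; ring_nf
  rw [sinh_eq, h2]
  linear_combination h / 2

theorem monotone_sinh_mul_exp_neg : Monotone fun y : ℝ => sinh y * exp (-y) := by
  intro y z hyz
  simp only [sinh_mul_exp_neg]
  gcongr ?_ / 2
  have := exp_le_exp.2 (by linarith : -2 * z ≤ -2 * y)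
  linarith

theorem sinh_mul_exp_neg_le (y : ℝ) : sinh y * exp (-y) ≤ 1 / 2 := by
  rw [sinh_mul_exp_neg]
  linarith [exp_pos (-2 * y)]

theorem one_sub_exp_neg_two_mul (y : ℝ) : 1 - exp (-2 * y) = 2 * exp (-y) * sinh y := by
  linarith [sinh_mul_exp_neg y]

end Hyperbolic

theorem tendsto_log_div_sq_of_le_of_le {Z : ℕ → ℝ} {F c d : ℝ} (hF : 0 < F) (hc : 0 < c)
    (hd : 0 < d) (hlow : ∀ n, F ^ n ^ 2 * c ^ n ≤ Z n) (hup : ∀ n, Z n ≤ F ^ n ^ 2 * d ^ n) :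
    Tendsto (fun n : ℕ => log (Z n) / (n : ℝ) ^ 2) atTop (nhds (log F)) := by
  have hlim : ∀ e : ℝ, Tendsto (fun n : ℕ => log F + log e / n) atTop (nhds (log F)) := fun e => by
    simpa using (tendsto_const_div_atTop_nhds_zero_nat (log e)).const_add (log F)
  have hlog : ∀ e : ℝ, 0 < e → ∀ n : ℕ, 1 ≤ n →
      log (F ^ n ^ 2 * e ^ n) / (n : ℝ) ^ 2 = log F + log e / n := by
    intro e he n hn
    rw [log_mul (by positivity) (by positivity), log_pow, log_pow]
    push_cast
    field_simp
  refine tendsto_of_tendsto_of_tendsto_of_le_of_le' (hlim c) (hlim d) ?_ ?_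
  · filter_upwards [eventually_ge_atTop 1] with n hn
    rw [← hlog c hc n hn]
    gcongr
    exact hlow n
  · filter_upwards [eventually_ge_atTop 1] with n hn
    rw [← hlog d hd n hn]
    have hZ : 0 < Z n := lt_of_lt_of_le (by positivity) (hlow n)
    gcongr
    exact hup n

section FerroelectricPhase

/-- The nodes `-2, -4, -6, …` of the measure whose moments are the derivatives of `φ`, as exponents
of its expansion in exponentials. -/
noncomputable def expNode (k : ℕ) : ℝ := -2 * (k + 1)

theorem expNode_nonpos (k : ℕ) : expNode k ≤ 0 := by
  unfold expNode
  linarith [k.cast_nonneg (α := ℝ)]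

theorem exp_expNode_mul (k : ℕ) (y : ℝ) :
    exp (expNode k * y) = exp (-2 * y) * exp (-2 * y) ^ k := by
  rw [← pow_succ', ← exp_nat_mul]
  congr 1
  simp only [expNode, Nat.cast_succ]
  ring

theorem hasSum_exp_expNode_mul {y : ℝ} (hy : 0 < y) :
    HasSum (fun k => exp (expNode k * y)) (exp (-y) / (2 * sinh y)) := by
  have hq : exp (-2 * y) < 1 := exp_lt_one_iff.2 (by linarith)
  have hsum : exp (-y) / (2 * sinh y) = exp (-2 * y) * (1 - exp (-2 * y))⁻¹ := by
    have hsq : exp (-2 * y) = exp (-y) * exp (-y) := by rw [← exp_add]; ring_nf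
    rw [one_sub_exp_neg_two_mul, hsq]
    field_simp
  simpa only [exp_expNode_mul, hsum] using
    (hasSum_geometric_of_lt_one (exp_pos _).le hq).mul_left (exp (-2 * y))

theorem exists_isMomentSeq_exp_expNode (C : ℝ) {y : ℝ} (hy : 0 < y) :
    ∃ s, IsMomentSeq expNode (fun k => C * exp (expNode k * y)) s :=
  ⟨_, isMomentSeq_iteratedDeriv_of_hasSum_exp expNode_nonpos
    (fun _ h => (hasSum_exp_expNode_mul h).mul_left C) hy⟩

theorem exp_neg_sub_div_sinh_sub {γ s : ℝ} (h₁ : sinh (s - γ) ≠ 0) (h₂ : sinh (s + γ) ≠ 0) :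
    exp (-(s - γ)) / sinh (s - γ) - exp (-(s + γ)) / sinh (s + γ) = phiSV γ s := by
  have h : sinh (2 * γ) =
      exp (-(s - γ)) * sinh (s + γ) - exp (-(s + γ)) * sinh (s - γ) := by
    rw [show 2 * γ = (s + γ) - (s - γ) by ring, sinh_sub, ← cosh_sub_sinh, ← cosh_sub_sinh]
    ring
  rw [phiSV, h]
  field_simp

/-- The weight at `expNode k` of the measure whose moments are the derivatives of `φ` at `t`. -/
noncomputable def phiWeight (γ t : ℝ) (k : ℕ) : ℝ :=
  4 * sinh (2 * (k + 1) * γ) * exp (expNode k * t)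

theorem hasSum_phiWeight {γ t : ℝ} (h : |γ| < t) : HasSum (phiWeight γ t) (phiSV γ t) := by
  obtain ⟨h₁, h₂⟩ := abs_lt.1 h
  have hsub : 0 < t - γ := by linarith
  have hadd : 0 < t + γ := by linarith
  have hsum := ((hasSum_exp_expNode_mul hsub).sub (hasSum_exp_expNode_mul hadd)).mul_left 2
  have hφ : phiSV γ t =
      2 * (exp (-(t - γ)) / (2 * sinh (t - γ)) - exp (-(t + γ)) / (2 * sinh (t + γ))) := by
    rw [← exp_neg_sub_div_sinh_sub (sinh_pos_iff.2 hsub).ne' (sinh_pos_iff.2 hadd).ne']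
    ring
  rw [hφ]
  refine hsum.congr_fun fun k => ?_
  rw [phiWeight, show expNode k * (t - γ) = 2 * (k + 1) * γ + expNode k * t by rw [expNode]; ring,
    show expNode k * (t + γ) = -(2 * (k + 1) * γ) + expNode k * t by rw [expNode]; ring,
    exp_add, exp_add, sinh_eq]
  ring

theorem isMomentSeq_iteratedDeriv_phiSV {γ t : ℝ} (h : |γ| < t) :
    IsMomentSeq expNode (phiWeight γ t) fun m => iteratedDeriv m (phiSV γ) t :=
  isMomentSeq_iteratedDeriv_of_hasSum_exp expNode_nonpos (fun _ => hasSum_phiWeight) h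

theorem phiWeight_eq (γ t : ℝ) (k : ℕ) :
    phiWeight γ t k = 4 * (sinh (2 * (k + 1) * γ) * exp (-(2 * (k + 1) * γ))) *
      exp (expNode k * (t - γ)) := by
  have h : exp (expNode k * t) = exp (-(2 * (k + 1) * γ)) * exp (expNode k * (t - γ)) := by
    rw [← exp_add, expNode]
    ring_nf
  rw [phiWeight, h]
  ring

theorem phiWeight_nonneg {γ : ℝ} (hγ : 0 ≤ γ) (t : ℝ) (k : ℕ) : 0 ≤ phiWeight γ t k := by
  have : 0 ≤ sinh (2 * (k + 1) * γ) := sinh_nonneg_iff.2 (by positivity)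
  unfold phiWeight
  positivity

theorem phiWeight_le (γ t : ℝ) (k : ℕ) : phiWeight γ t k ≤ 2 * exp (expNode k * (t - γ)) := by
  rw [phiWeight_eq]
  gcongr
  linarith [sinh_mul_exp_neg_le (2 * (k + 1) * γ)]

theorem le_phiWeight {γ : ℝ} (hγ : 0 ≤ γ) (t : ℝ) (k : ℕ) :
    4 * (sinh (2 * γ) * exp (-(2 * γ))) * exp (expNode k * (t - γ)) ≤ phiWeight γ t k := by
  rw [phiWeight_eq]
  have h : 2 * γ ≤ 2 * (k + 1) * γ := by nlinarith [k.cast_nonneg (α := ℝ)]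
  gcongr ?_ * _
  exact mul_le_mul_of_nonneg_left (monotone_sinh_mul_exp_neg h) zero_le_four

theorem IsMomentSeq.sinh_pow_mul_det_hankelMatrix_div {s : ℕ → ℝ} {C y : ℝ} (hy : 0 < y)
    (hs : IsMomentSeq expNode (fun k => C * exp (expNode k * y)) s) (n : ℕ) :
    sinh y ^ n ^ 2 * (hankelMatrix s n).det / (∏ j ∈ range n, (j.factorial : ℝ)) ^ 2 =
      (C * exp (-y) / 2) ^ n := by
  have hq : |exp (-2 * y)| < 1 := by
    rw [abs_exp]
    exact exp_lt_one_iff.2 (by linarith)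
  have hsq : exp (-2 * y) = exp (-y) ^ 2 := by rw [← exp_nat_mul]; push_cast; ring_nf
  have hgeom : IsMomentSeq expNode (fun k => C * exp (-2 * y) * exp (-2 * y) ^ k) s := by
    simpa only [exp_expNode_mul, mul_assoc] using hs
  have hratio : C * exp (-2 * y) / (1 - exp (-2 * y)) = C * exp (-y) / 2 / sinh y := by
    rw [one_sub_exp_neg_two_mul, hsq]
    field_simp
  have hpair : (-2) ^ 2 * exp (-2 * y) / (1 - exp (-2 * y)) ^ 2 = 1 / sinh y ^ 2 := by
    rw [one_sub_exp_neg_two_mul, hsq]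
    field_simp
  have hfactorial : ∏ j ∈ range n, (j.factorial : ℝ) ≠ 0 :=
    prod_ne_zero_iff.2 fun j _ => mod_cast j.factorial_ne_zero
  have hexponent : n ^ 2 = n + 2 * n.choose 2 := by
    rw [Nat.choose_two_right, Nat.mul_div_cancel' n.even_mul_pred_self.two_dvd, ← mul_one_add]
    cases n <;> simp [sq, add_comm]
  rw [hgeom.det_hankelMatrix_of_geometric hq (a := -2) (b := -2)
    (fun k => by rw [expNode]; ring) n, hratio, hpair, hexponent, pow_add, pow_mul,
    div_pow _ (sinh y), one_div, inv_pow]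
  field_simp

theorem ZSV_eq_sinh_pow_mul (n : ℕ) (t γ : ℝ) :
    ZSV n t γ = sinh (t + γ) ^ n ^ 2 * (sinh (t - γ) ^ n ^ 2 *
      (hankelMatrix (fun m => iteratedDeriv m (phiSV γ) t) n).det /
        (∏ j ∈ range n, (j.factorial : ℝ)) ^ 2) := by
  have hτ : tauSV n t γ = (hankelMatrix (fun m => iteratedDeriv m (phiSV γ) t) n).det := rfl
  rw [ZSV, hτ, mul_pow]
  ring

theorem le_ZSV {t γ : ℝ} (hγ : 0 ≤ γ) (ht : γ < t) (n : ℕ) :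
    sinh (t + γ) ^ n ^ 2 * (2 * sinh (2 * γ) * exp (-(t + γ))) ^ n ≤ ZSV n t γ := by
  have hsub : 0 < t - γ := sub_pos.2 ht
  have hsinh_add : 0 ≤ sinh (t + γ) := sinh_nonneg_iff.2 (by linarith)
  obtain ⟨s, hs⟩ := exists_isMomentSeq_exp_expNode (4 * (sinh (2 * γ) * exp (-(2 * γ)))) hsub
  have hφ := isMomentSeq_iteratedDeriv_phiSV ((abs_of_nonneg hγ).trans_lt ht)
  have hdet := hs.det_hankelMatrix_le hφ (fun k => by positivity) (le_phiWeight hγ t) n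
  have hbase : 2 * sinh (2 * γ) * exp (-(t + γ)) =
      4 * (sinh (2 * γ) * exp (-(2 * γ))) * exp (-(t - γ)) / 2 := by
    rw [show -(t + γ) = -(2 * γ) + -(t - γ) by ring, exp_add]
    ring
  rw [ZSV_eq_sinh_pow_mul, hbase, ← hs.sinh_pow_mul_det_hankelMatrix_div hsub n]
  gcongr

theorem ZSV_le {t γ : ℝ} (hγ : 0 ≤ γ) (ht : γ < t) (n : ℕ) :
    ZSV n t γ ≤ sinh (t + γ) ^ n ^ 2 * exp (-(t - γ)) ^ n := by
  have hsub : 0 < t - γ := sub_pos.2 ht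
  have hsinh_add : 0 ≤ sinh (t + γ) := sinh_nonneg_iff.2 (by linarith)
  obtain ⟨s, hs⟩ := exists_isMomentSeq_exp_expNode 2 hsub
  have hφ := isMomentSeq_iteratedDeriv_phiSV ((abs_of_nonneg hγ).trans_lt ht)
  have hdet := hφ.det_hankelMatrix_le hs (phiWeight_nonneg hγ t) (phiWeight_le γ t) n
  have hbase : exp (-(t - γ)) = 2 * exp (-(t - γ)) / 2 := by ring
  rw [ZSV_eq_sinh_pow_mul, hbase, ← hs.sinh_pow_mul_det_hankelMatrix_div hsub n]
  gcongr

end FerroelectricPhase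

/-- **Free energy in the ferroelectric phase (gs6).**
For fixed `t > γ > 0`, `Z_n > 0` for all `n ≥ 1` and
`lim_{n→∞} (ln Z_n)/n² = ln sinh(t+γ)`. -/
theorem free_energy_ferroelectric (t γ : ℝ) (hγ : 0 < γ) (ht : γ < t) :
    (∀ n : ℕ, 1 ≤ n → 0 < ZSV n t γ) ∧
    Filter.Tendsto (fun n : ℕ => Real.log (ZSV n t γ) / (n : ℝ) ^ 2)
      Filter.atTop (nhds (Real.log (Real.sinh (t + γ)))) := by
  have hF : 0 < sinh (t + γ) := sinh_pos_iff.2 (by linarith)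
  have hlow := le_ZSV hγ.le ht
  have hup := ZSV_le hγ.le ht
  exact ⟨fun n _ => lt_of_lt_of_le (by positivity) (hlow n),
    tendsto_log_div_sq_of_le_of_le hF (by positivity) (by positivity) hlow hup⟩
end
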